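/- Let $K$ be a field and $G$ the graph formed by joining two cycles $C_n$ and $C_m$ ($n, m \geq 3$) at a single common vertex, with $N = |V(G)| = n + m - 1$. Then $\operatorname{ara}\, I(G) = \operatorname{pd}_R(R/I(G))$, and this common value equals: $\frac{2N+1}{3}$ if $N \equiv 1 \pmod 3$; $\frac{2N}{3}$ if $N \equiv 0 \pmod 3$; and if $N \equiv 2 \pmod 3$, it equals $\frac{2N+2}{3}$ when $m \equiv 0 \pmod 3$ (equivalently when both $n$ and $m$ are divisible by 3), and $\frac{2N-1}{3}$ otherwise. -/

import Mathlib

open MvPolynomial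

/-- Arithmetical rank: the least number of elements of `R` generating `I` up to radical. -/
noncomputable def araRank {R : Type} [CommRing R] (I : Ideal R) : ℕ :=
  sInf {s : ℕ | ∃ f : Fin s → R, (Ideal.span (Set.range f)).radical = I.radical}

/-- Projective dimension of an `R`-module `M`, characterized via vanishing of the
`Ext` functors: the least `d` such that `Ext^i(M, N) = 0` for all `i > d` and all `N`. -/
noncomputable def projDim (R : Type) [CommRing R] (M : Type) [AddCommGroup M]
    [Module R M] : ℕ∞ :=
  sInf {d : ℕ∞ | ∀ i : ℕ, d < i → ∀ N : ModuleCat R,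
    Subsingleton (((Ext R (ModuleCat R) i).obj (Opposite.op (ModuleCat.of R M))).obj N)}

/-- The edge ideal of the graph consisting of two cycles `Cₙ` and `C_m` sharing exactly
one vertex.  The `N = n + m - 1` vertices are indexed by `ZMod N`: the cycle `Cₙ` has
vertices `0, 1, …, n-1` and the cycle `C_m` has vertices `0, n, n+1, …, n+m-2`, the
common vertex being `0`. -/
noncomputable def vertexJoinIdeal (K : Type) [Field K] (n m : ℕ) :
    Ideal (MvPolynomial (ZMod (n + m - 1)) K) :=
  Ideal.span
    (((fun j : ℕ => (X ((j : ZMod (n + m - 1))) * X (((j + 1 : ℕ) : ZMod (n + m - 1))) :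
        MvPolynomial (ZMod (n + m - 1)) K)) '' Set.Iio (n - 1))
      ∪ {X (((n - 1 : ℕ) : ZMod (n + m - 1))) * X 0}
      ∪ {X 0 * X (((n : ℕ) : ZMod (n + m - 1)))}
      ∪ ((fun j : ℕ => (X ((j : ZMod (n + m - 1))) * X (((j + 1 : ℕ) : ZMod (n + m - 1))) :
          MvPolynomial (ZMod (n + m - 1)) K)) '' Set.Ico n (n + m - 2))
      ∪ {X (((n + m - 2 : ℕ) : ZMod (n + m - 1))) * X 0})

open CategoryTheory

theorem subsingleton_ext_succ_iff {R : Type} [CommRing R] (X Y : ModuleCat.{0} R) (n : ℕ) :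
    Subsingleton (((Ext R (ModuleCat R) (n + 1)).obj (Opposite.op X)).obj Y) ↔
      Subsingleton (Abelian.Ext X Y (n + 1)) := by
  let P := projectiveResolution X
  have e1 : Subsingleton (((Ext R (ModuleCat R) (n + 1)).obj (Opposite.op X)).obj Y) ↔
      (P.complex.linearYonedaObj R Y).ExactAt (n + 1) := by
    rw [HomologicalComplex.exactAt_iff_isZero_homology, ← (P.isoExt (n + 1) Y).isZero_iff,
      ModuleCat.isZero_iff_subsingleton]
  rw [e1, HomologicalComplex.exactAt_iff' _ n (n + 1) (n + 2) (by simp) (by simp),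
    ShortComplex.moduleCat_exact_iff]
  constructor
  · intro h
    refine ⟨fun a b => ?_⟩
    have key : ∀ a : Abelian.Ext X Y (n + 1), a = 0 := by
      intro a
      obtain ⟨f, hf, rfl⟩ := P.extMk_surjective a (n + 2) rfl
      rw [P.extMk_eq_zero_iff f _ _ _ n rfl]
      obtain ⟨g, hg⟩ := h f hf
      exact ⟨g, hg⟩
    rw [key a, key b]
  · intro h f hf
    have := (P.extMk_eq_zero_iff f (n + 2) rfl hf n rfl).1 (Subsingleton.elim _ _)
    obtain ⟨g, hg⟩ := this
    exact ⟨g, hg⟩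

/-- The projective dimension as an infimum over vanishing of `Ext`, given an upper bound `p` and
a module witnessing that `p` is attained. -/
theorem sInf_ext_eq {R : Type} [CommRing R] {M : Type} [AddCommGroup M] [Module R M] {p : ℕ}
    (hle : HasProjectiveDimensionLT (ModuleCat.of R M) (p + 1))
    (N : ModuleCat.{0} R) (hp : 0 < p)
    (hN : ¬ Subsingleton (Abelian.Ext (ModuleCat.of R M) N p)) :
    sInf {d : ℕ∞ | ∀ i : ℕ, d < i → ∀ N : ModuleCat R,
    Subsingleton (((Ext R (ModuleCat R) i).obj (Opposite.op (ModuleCat.of R M))).obj N)} = p := by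
  apply le_antisymm
  · apply sInf_le
    intro i hi N
    have hi : p < i := by exact_mod_cast hi
    obtain ⟨i, rfl⟩ := Nat.exists_eq_succ_of_ne_zero
      (Nat.ne_of_gt (lt_of_le_of_lt (Nat.zero_le _) hi))
    rw [Nat.succ_eq_add_one, subsingleton_ext_succ_iff]
    exact HasProjectiveDimensionLT.subsingleton _ (p + 1) _ (by lia) _
  · apply le_sInf
    intro d hd
    by_contra! h
    obtain ⟨q, rfl⟩ := Nat.exists_eq_succ_of_ne_zero hp.ne'
    exact hN ((subsingleton_ext_succ_iff _ _ _).1 (hd _ h N))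

/-- `x` is killed by powers of every element of `J`. -/
def IsPowTorsion {R : Type} [CommRing R] {M : Type} [AddCommGroup M] [Module R M]
    (J : Ideal R) (x : M) : Prop :=
  J ≤ (Ideal.torsionOf R M x).radical

namespace IsPowTorsion

variable {R : Type} [CommRing R] {M : Type} [AddCommGroup M] [Module R M]
  {M' : Type} [AddCommGroup M'] [Module R M'] {J J' : Ideal R} {x y : M}

theorem of_radical_le (h : J'.radical ≤ J.radical) (hx : IsPowTorsion J x) :
    IsPowTorsion J' x :=
  Ideal.le_radical.trans (h.trans (Ideal.radical_le_radical_iff.2 hx))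

theorem mono (h : J' ≤ J) (hx : IsPowTorsion J x) : IsPowTorsion J' x :=
  le_trans h hx

theorem sup (h : IsPowTorsion J x) (h' : IsPowTorsion J' x) : IsPowTorsion (J ⊔ J') x :=
  sup_le h h'

theorem of_torsionOf_le {x' : M'} (h : Ideal.torsionOf R M x ≤ Ideal.torsionOf R M' x')
    (hx : IsPowTorsion J x) : IsPowTorsion J x' :=
  le_trans hx (Ideal.radical_mono h)

theorem map (f : M →ₗ[R] M') (hx : IsPowTorsion J x) : IsPowTorsion J (f x) := by
  refine hx.of_torsionOf_le fun r hr => ?_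
  rw [Ideal.mem_torsionOf_iff] at hr ⊢
  rw [← map_smul, hr, map_zero]

theorem smul (r : R) (hx : IsPowTorsion J x) : IsPowTorsion J (r • x) :=
  hx.map (LinearMap.lsmul R M r)

theorem add (hx : IsPowTorsion J x) (hy : IsPowTorsion J y) : IsPowTorsion J (x + y) := by
  have : (Ideal.torsionOf R M x) ⊓ (Ideal.torsionOf R M y) ≤ Ideal.torsionOf R M (x + y) := by
    rintro r ⟨h1, h2⟩
    have h1 : r • x = 0 := h1
    have h2 : r • y = 0 := h2
    rw [Ideal.mem_torsionOf_iff, smul_add, h1, h2, add_zero]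
  refine le_trans ?_ (Ideal.radical_mono this)
  rw [Ideal.radical_inf]
  exact le_inf hx hy

theorem neg (hx : IsPowTorsion J x) : IsPowTorsion J (-x) := by
  simpa using hx.smul (-1)

theorem sub (hx : IsPowTorsion J x) (hy : IsPowTorsion J y) : IsPowTorsion J (x - y) := by
  rw [sub_eq_add_neg]; exact hx.add hy.neg

theorem exists_pow_smul_eq_zero (hx : IsPowTorsion J x) {f : R} (hf : f ∈ J) :
    ∃ k : ℕ, f ^ k • x = 0 := hx hf

theorem span_singleton {f : R} {k : ℕ} (h : f ^ k • x = 0) :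
    IsPowTorsion (Ideal.span {f}) x := by
  rw [IsPowTorsion, Ideal.span_singleton_le_iff_mem]
  exact ⟨k, h⟩

theorem exists_pow_le [IsNoetherianRing R] (hx : IsPowTorsion J x) :
    ∃ t : ℕ, J ^ t ≤ Ideal.torsionOf R M x :=
  Ideal.exists_pow_le_of_le_radical_of_fg hx (IsNoetherian.noetherian J)

end IsPowTorsion

theorem Module.Injective.exists_comp_eq {R : Type} [CommRing R] {M X Y : Type} [AddCommGroup M]
    [Module R M] [AddCommGroup X] [Module R X] [AddCommGroup Y] [Module R Y]
    (hM : Module.Injective R M) (g : X →ₗ[R] Y) (h : X →ₗ[R] M)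
    (hgh : LinearMap.ker g ≤ LinearMap.ker h) : ∃ H : Y →ₗ[R] M, ∀ x, H (g x) = h x := by
  obtain ⟨H, hH⟩ := hM.out ((LinearMap.ker g).liftQ g le_rfl)
    (by rw [← LinearMap.ker_eq_bot]; exact Submodule.ker_liftQ_eq_bot _ _ _ le_rfl)
    ((LinearMap.ker g).liftQ h hgh)
  exact ⟨H, fun x => by simpa using hH (Submodule.Quotient.mk x)⟩

theorem Module.Injective.exists_pow_smul_sub_eq_zero {R : Type} [CommRing R] [IsNoetherianRing R]
    {M : Type} [AddCommGroup M] [Module R M] (hM : Module.Injective R M) (f : R) (k : ℕ) (z : M) :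
    ∃ (w : M) (l : ℕ), Ideal.torsionOf R M z ≤ Ideal.torsionOf R M w ∧
      f ^ l • (z - f ^ k • w) = 0 := by
  let c : ℕ →o Ideal R :=
    { toFun := fun l => Ideal.torsionOf R M (f ^ l • z)
      monotone' := by
        intro a b hab r hr
        rw [Ideal.mem_torsionOf_iff] at hr ⊢
        obtain ⟨e, rfl⟩ := Nat.exists_eq_add_of_le hab
        rw [pow_add, mul_comm, mul_smul, smul_comm, hr, smul_zero] }
  obtain ⟨l, hl⟩ := monotone_stabilizes_iff_noetherian.2 ‹IsNoetherianRing R› c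
  have hl' : ∀ r : R, r • f ^ (l + k) • z = 0 → r • f ^ l • z = 0 := by
    intro r hr
    have : r ∈ c (l + k) := hr
    rw [← hl (l + k) (by lia)] at this
    exact this
  obtain ⟨H, hH⟩ := hM.exists_comp_eq
    ((Ideal.torsionOf R M z).mkQ ∘ₗ LinearMap.lsmul R R (f ^ (l + k)))
    (LinearMap.toSpanSingleton R M (f ^ l • z)) (by
      intro r hr
      have hr : (Ideal.torsionOf R M z).mkQ (f ^ (l + k) * r) = 0 := hr
      rw [Submodule.mkQ_apply, Submodule.Quotient.mk_eq_zero, Ideal.mem_torsionOf_iff] at hr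
      exact hl' r (by rw [← mul_smul, mul_comm, hr]))
  refine ⟨H ((Ideal.torsionOf R M z).mkQ 1), l, ?_, ?_⟩
  · intro r hr
    rw [Ideal.mem_torsionOf_iff, ← map_smul, ← map_smul]
    have : (Ideal.torsionOf R M z).mkQ (r • (1 : R)) = 0 := by
      rw [Submodule.mkQ_apply, Submodule.Quotient.mk_eq_zero]
      simpa using hr
    rw [this, map_zero]
  · have h1 := hH 1
    simp only [LinearMap.comp_apply, LinearMap.lsmul_apply, LinearMap.toSpanSingleton_apply,
      one_smul] at h1
    rw [map_smul, map_smul] at h1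
    rw [smul_sub, ← mul_smul, ← pow_add, h1, sub_self]

theorem Module.Injective.exists_isPowTorsion_add {R : Type} [CommRing R] [IsNoetherianRing R]
    {M : Type} [AddCommGroup M] [Module R M] (hM : Module.Injective R M) {A B : Ideal R} {y : M}
    (hy : IsPowTorsion (A * B) y) :
    ∃ a b : M, IsPowTorsion A a ∧ IsPowTorsion B b ∧ y = a + b := by
  obtain ⟨t, ht⟩ := hy.exists_pow_le
  obtain ⟨k, hk⟩ := Ideal.exists_pow_inf_eq_pow_smul A (B ^ t : Submodule R R)
  have hu : ∃ u, A ^ u ⊓ B ^ u ≤ Ideal.torsionOf R M y := by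
    refine ⟨k + t, le_trans ?_ ht⟩
    have h := hk (k + t) (by lia)
    have e : (A ^ (k + t) • ⊤ : Submodule R R) = A ^ (k + t) := by simp
    rw [e, Nat.add_sub_cancel_left] at h
    rw [mul_pow]
    calc A ^ (k + t) ⊓ B ^ (k + t) ≤ A ^ (k + t) ⊓ B ^ t :=
          inf_le_inf_left _ (Ideal.pow_le_pow_right (by lia))
      _ ≤ A ^ t * B ^ t := by
          refine le_trans (le_of_eq h) ?_
          exact Submodule.smul_mono le_rfl inf_le_right
  obtain ⟨u, hu⟩ := hu
  obtain ⟨H, hH⟩ := hM.exists_comp_eq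
    (LinearMap.prod (A ^ u : Submodule R R).mkQ (B ^ u : Submodule R R).mkQ)
    (LinearMap.toSpanSingleton R M y) (by
      intro r hr
      rw [LinearMap.ker_prod, Submodule.ker_mkQ, Submodule.ker_mkQ] at hr
      exact hu hr)
  have hT : ∀ (N : Ideal R) (f : (R ⧸ N) →ₗ[R] M), IsPowTorsion N (f (N.mkQ 1)) := by
    intro N f
    refine le_trans ?_ Ideal.le_radical
    intro r hr
    rw [Ideal.mem_torsionOf_iff, ← map_smul, ← map_smul]
    have : N.mkQ (r • (1 : R)) = 0 := by
      rw [Submodule.mkQ_apply, Submodule.Quotient.mk_eq_zero]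
      simpa using hr
    rw [this, map_zero]
  have hrad : ∀ (N : Ideal R), N.radical ≤ (N ^ u).radical := fun N => by
    rw [Ideal.radical_le_radical_iff]
    intro r hr
    exact ⟨u, Ideal.pow_mem_pow hr u⟩
  refine ⟨(H ∘ₗ LinearMap.inl R _ _) ((A ^ u : Submodule R R).mkQ 1),
    (H ∘ₗ LinearMap.inr R _ _) ((B ^ u : Submodule R R).mkQ 1),
    (hT _ _).of_radical_le (hrad A), (hT _ _).of_radical_le (hrad B), ?_⟩
  have h1 := hH 1
  simp only [LinearMap.prod_apply, LinearMap.toSpanSingleton_apply, one_smul] at h1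
  simp only [LinearMap.comp_apply, LinearMap.inl_apply, LinearMap.inr_apply]
  rw [← map_add, ← h1]
  simp

/-- Vanishing in degree `i + 1` of the cohomology of the `J`-power-torsion of a complex. -/
def TorsionExact {R : Type} [CommRing R] {E : ℕ → Type} [∀ i, AddCommGroup (E i)]
    [∀ i, Module R (E i)] (d : ∀ i, E i →ₗ[R] E (i + 1)) (J : Ideal R) (i : ℕ) : Prop :=
  ∀ z : E (i + 1), IsPowTorsion J z → d (i + 1) z = 0 → ∃ y : E i, IsPowTorsion J y ∧ d i y = z

section

variable {R : Type} [CommRing R] {E : ℕ → Type} [∀ i, AddCommGroup (E i)]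
    [∀ i, Module R (E i)] {d : ∀ i, E i →ₗ[R] E (i + 1)}

theorem TorsionExact.congr {J J' : Ideal R} {i : ℕ} (h : TorsionExact d J i)
    (hJ : J.radical = J'.radical) : TorsionExact d J' i := by
  intro z hz hdz
  obtain ⟨y, hy, hyz⟩ := h z (hz.of_radical_le hJ.le) hdz
  exact ⟨y, hy.of_radical_le hJ.ge, hyz⟩

theorem TorsionExact.sup_span_singleton [IsNoetherianRing R]
    (hE : ∀ i, Module.Injective R (E i)) (hd : ∀ i x, d (i + 1) (d i x) = 0)
    {J : Ideal R} {i : ℕ} (h : TorsionExact d J i)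
    (h' : TorsionExact d J (i + 1)) (f : R) : TorsionExact d (J ⊔ Ideal.span {f}) (i + 1) := by
  intro z hz hdz
  obtain ⟨k, hk⟩ := hz.exists_pow_smul_eq_zero (Ideal.mem_sup_right (Ideal.mem_span_singleton_self f))
  obtain ⟨y, hy, rfl⟩ := h' z (hz.mono le_sup_left) hdz
  obtain ⟨y₀, hy₀, e⟩ := h (f ^ k • y) (hy.smul _) (by rw [map_smul, hk])
  obtain ⟨w, l, hw, hl⟩ := (hE i).exists_pow_smul_sub_eq_zero f k y₀
  refine ⟨y - d i w, (hy.sub ((hy₀.of_torsionOf_le hw).map _)).sup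
    (IsPowTorsion.span_singleton (k := l + k) ?_), by rw [map_sub, hd, sub_zero]⟩
  rw [pow_add, mul_smul, smul_sub, ← e, ← map_smul, ← map_sub, ← map_smul, hl, map_zero]

theorem torsionExact_span_range [IsNoetherianRing R]
    (hE : ∀ i, Module.Injective R (E i)) (hd : ∀ i x, d (i + 1) (d i x) = 0)
    (hex : ∀ i z, d (i + 1) z = 0 → ∃ y, d i y = z) {s : ℕ} (f : Fin s → R) {i : ℕ} (hi : s ≤ i) :
    TorsionExact d (Ideal.span (Set.range f)) i := by
  induction s generalizing i with
  | zero =>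
    intro z _ hdz
    obtain ⟨y, hy⟩ := hex i z hdz
    refine ⟨y, ?_, hy⟩
    rw [Set.range_eq_empty, Ideal.span_empty]
    exact bot_le
  | succ s ih =>
    obtain ⟨j, rfl⟩ : ∃ j, i = j + 1 := ⟨i - 1, by lia⟩
    have e : Ideal.span (Set.range f) =
        Ideal.span (Set.range (fun k => f (Fin.castSucc k))) ⊔ Ideal.span {f (Fin.last s)} := by
      rw [← Ideal.span_union]
      congr 1
      ext x
      simp only [Set.mem_range, Set.mem_union, Set.mem_singleton_iff, Fin.exists_fin_succ']
      tauto
    rw [e]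
    exact TorsionExact.sup_span_singleton hE hd (ih _ (by lia)) (ih _ (by lia)) _

theorem TorsionExact.sup [IsNoetherianRing R]
    (hE : ∀ i, Module.Injective R (E i)) (hd : ∀ i x, d (i + 1) (d i x) = 0)
    {I A B : Ideal R} (hA : I ≤ A) (hB : I ≤ B) (hAB : A * B ≤ I.radical) {i : ℕ}
    (h : TorsionExact d I i) (h₁ : TorsionExact d A (i + 1)) (h₂ : TorsionExact d B (i + 1)) :
    TorsionExact d (A ⊔ B) (i + 1) := by
  intro z hz hdz
  obtain ⟨a, ha, rfl⟩ := h₁ z (hz.mono le_sup_left) hdz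
  obtain ⟨b, hb, hab⟩ := h₂ _ (hz.mono le_sup_right) hdz
  obtain ⟨c, hc, e⟩ := h (a - b) ((ha.mono hA).sub (hb.mono hB)) (by rw [map_sub, hab, sub_self])
  obtain ⟨c₁, c₂, hc₁, hc₂, rfl⟩ := (hE i).exists_isPowTorsion_add
    (hc.of_radical_le (Ideal.radical_le_radical_iff.2 hAB))
  refine ⟨a - d i c₁, (ha.sub (hc₁.map _)).sup ?_, by rw [map_sub, hd, sub_zero]⟩
  have : a - d i c₁ = b + d i c₂ := by
    rw [map_add] at e
    rw [sub_eq_iff_eq_add, add_assoc, add_comm (d i c₂), e, add_sub_cancel]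
  rw [this]
  exact hb.add (hc₂.map _)

end

section ExtVanishing

variable {R : Type} [CommRing R]

theorem ModuleCat.shortExact_of_linearMap {M₁ M₂ M₃ : Type} [AddCommGroup M₁] [Module R M₁]
    [AddCommGroup M₂] [Module R M₂] [AddCommGroup M₃] [Module R M₃]
    (f : M₁ →ₗ[R] M₂) (g : M₂ →ₗ[R] M₃) (hf : Function.Injective f)
    (hg : Function.Surjective g) (h : Function.Exact f g) :
    (ModuleCat.shortComplexOfCompEqZero f g h.linearMap_comp_eq_zero).ShortExact where
  exact := ModuleCat.shortComplex_exact _ h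
  mono_f := by rw [ModuleCat.mono_iff_injective]; exact hf
  epi_g := by rw [ModuleCat.epi_iff_surjective]; exact hg

/-- `Ext^i(M, N) = 0`. -/
def ExtVanish (M N : ModuleCat.{0} R) (i : ℕ) : Prop := ∀ e : Abelian.Ext M N i, e = 0

variable {S : ShortComplex (ModuleCat.{0} R)} {M N : ModuleCat.{0} R} {i : ℕ}

theorem ExtVanish.X₂ (hS : S.ShortExact) (h₁ : ExtVanish S.X₁ N i) (h₃ : ExtVanish S.X₃ N i) :
    ExtVanish S.X₂ N i := by
  intro e
  obtain ⟨x, rfl⟩ := Abelian.Ext.contravariant_sequence_exact₂ hS _ e (h₁ _)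
  rw [h₃ x, Abelian.Ext.comp_zero]

theorem ExtVanish.X₃ (hS : S.ShortExact) (h₁ : ExtVanish S.X₁ N i) (h₂ : ExtVanish S.X₂ N (i + 1)) :
    ExtVanish S.X₃ N (i + 1) := by
  intro e
  obtain ⟨x, rfl⟩ := Abelian.Ext.contravariant_sequence_exact₃ hS _ e (h₂ _) (add_comm 1 i)
  rw [h₁ x, Abelian.Ext.comp_zero]

theorem ExtVanish.X₁ (hS : S.ShortExact) (h₂ : ExtVanish S.X₂ N i) (h₃ : ExtVanish S.X₃ N (i + 1)) :
    ExtVanish S.X₁ N i := by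
  intro e
  obtain ⟨x, rfl⟩ := Abelian.Ext.contravariant_sequence_exact₁ hS _ e (add_comm 1 i) (h₃ _)
  rw [h₂ x, Abelian.Ext.comp_zero]

theorem Abelian.Ext.smul_eq_mk₀_comp (r : R) (e : Abelian.Ext M N i) :
    r • e = (Abelian.Ext.mk₀ (r • 𝟙 M)).comp e (zero_add i) := by
  simp [Abelian.Ext.mk₀_smul]

theorem Abelian.Ext.smul_eq_comp_mk₀ (r : R) (e : Abelian.Ext M N i) :
    r • e = e.comp (Abelian.Ext.mk₀ (r • 𝟙 N)) (add_zero i) := by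
  simp [Abelian.Ext.mk₀_smul]

theorem Abelian.Ext.smul_eq_zero_of_left {r : R} (h : ∀ m : M, r • m = 0)
    (e : Abelian.Ext M N i) : r • e = 0 := by
  have : r • 𝟙 M = 0 := ModuleCat.hom_ext (LinearMap.ext fun m => h m)
  rw [smul_eq_mk₀_comp, this, Abelian.Ext.mk₀_zero, Abelian.Ext.zero_comp]

theorem Abelian.Ext.smul_eq_zero_of_right {r : R} (h : ∀ m : N, r • m = 0)
    (e : Abelian.Ext M N i) : r • e = 0 := by
  have : r • 𝟙 N = 0 := ModuleCat.hom_ext (LinearMap.ext fun m => h m)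
  rw [smul_eq_comp_mk₀, this, Abelian.Ext.mk₀_zero, Abelian.Ext.comp_zero]

theorem ExtVanish.of_smul {r : R} (h : ∀ m : M, r • m = 0) (h' : ∀ n : N, r • n = n) :
    ExtVanish M N i := by
  intro e
  have h1 := Abelian.Ext.smul_eq_zero_of_left h e
  have : r • 𝟙 N = 𝟙 N := ModuleCat.hom_ext (LinearMap.ext fun m => h' m)
  rwa [Abelian.Ext.smul_eq_comp_mk₀, this, Abelian.Ext.comp_mk₀_id] at h1

theorem ExtVanish.prod {M₁ M₂ : Type} [AddCommGroup M₁] [Module R M₁]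
    [AddCommGroup M₂] [Module R M₂] (h₁ : ExtVanish (ModuleCat.of R M₁) N i)
    (h₂ : ExtVanish (ModuleCat.of R M₂) N i) : ExtVanish (ModuleCat.of R (M₁ × M₂)) N i :=
  ExtVanish.X₂ (ModuleCat.shortExact_of_linearMap (LinearMap.inl R M₁ M₂) (LinearMap.snd R M₁ M₂)
    LinearMap.inl_injective LinearMap.snd_surjective Function.Exact.inl_snd) h₁ h₂

/-- The cyclic module `R ⧸ J` as an object of the module category. -/
abbrev cyclicMod (J : Ideal R) : ModuleCat.{0} R := ModuleCat.of R (R ⧸ J)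

/-- `Cx = (J : x)`, giving `R ⧸ Cx → R ⧸ J → R ⧸ (J, x)`. -/
def IsColonOf (C J : Ideal R) (x : R) : Prop := ∀ r, r ∈ C ↔ x * r ∈ J

/-- Multiplication by `x` from `R ⧸ (J : x)` to `R ⧸ J`. -/
def colonMap {C J : Ideal R} {x : R} (h : IsColonOf C J x) : (R ⧸ C) →ₗ[R] (R ⧸ J) :=
  Submodule.mapQ C J (LinearMap.lsmul R R x) fun r hr => (h r).1 hr

theorem shortExact_colon {C J : Ideal R} {x : R} (h : IsColonOf C J x) :
    ∃ hz, (ModuleCat.shortComplexOfCompEqZero (colonMap h)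
      (Submodule.factor (le_sup_left : J ≤ J ⊔ Ideal.span {x})) hz).ShortExact := by
  refine ⟨_, ModuleCat.shortExact_of_linearMap _ _ ?_ (Submodule.factor_surjective _) ?_⟩
  · rw [injective_iff_map_eq_zero]
    intro a ha
    obtain ⟨r, rfl⟩ := Submodule.Quotient.mk_surjective _ a
    have : (Submodule.Quotient.mk (x * r) : R ⧸ J) = 0 := ha
    rw [Submodule.Quotient.mk_eq_zero] at this ⊢
    exact (h r).2 this
  · intro a
    obtain ⟨r, rfl⟩ := Submodule.Quotient.mk_surjective _ a
    constructor
    · intro ha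
      have : (Submodule.Quotient.mk r : R ⧸ (J ⊔ Ideal.span {x})) = 0 := ha
      rw [Submodule.Quotient.mk_eq_zero, Submodule.mem_sup] at this
      obtain ⟨j, hj, y, hy, rfl⟩ := this
      obtain ⟨s, rfl⟩ := Ideal.mem_span_singleton'.1 hy
      refine ⟨Submodule.Quotient.mk s, ?_⟩
      change (Submodule.Quotient.mk (x * s) : R ⧸ J) = _
      rw [eq_comm, Submodule.Quotient.eq]
      simpa [mul_comm] using hj
    · rintro ⟨b, hb⟩
      obtain ⟨s, rfl⟩ := Submodule.Quotient.mk_surjective _ b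
      rw [← hb]
      change (Submodule.Quotient.mk (x * s) : R ⧸ (J ⊔ Ideal.span {x})) = 0
      rw [Submodule.Quotient.mk_eq_zero]
      exact Ideal.mul_mem_right _ _ (Ideal.mem_sup_right (Ideal.mem_span_singleton_self x))

theorem colonMap_self {J : Ideal R} {x : R} (h : IsColonOf J J x) :
    ModuleCat.ofHom (colonMap h) = x • 𝟙 (cyclicMod J) := by
  refine ModuleCat.hom_ext (LinearMap.ext fun a => ?_)
  obtain ⟨r, rfl⟩ := Submodule.Quotient.mk_surjective _ a
  rfl

theorem shortExact_inf_sup (A B : Ideal R) :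
    ∃ S : ShortComplex (ModuleCat.{0} R), S.ShortExact ∧ S.X₁ = cyclicMod (A ⊓ B) ∧
      S.X₂ = ModuleCat.of R ((R ⧸ A) × (R ⧸ B)) ∧ S.X₃ = cyclicMod (A ⊔ B) := by
  let f : (R ⧸ (A ⊓ B)) →ₗ[R] (R ⧸ A) × (R ⧸ B) :=
    (Submodule.factor (inf_le_left : A ⊓ B ≤ A)).prod (Submodule.factor (inf_le_right : A ⊓ B ≤ B))
  let g : (R ⧸ A) × (R ⧸ B) →ₗ[R] (R ⧸ (A ⊔ B)) :=
    (Submodule.factor (le_sup_left : A ≤ A ⊔ B)).coprod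
      (-(Submodule.factor (le_sup_right : B ≤ A ⊔ B)))
  have hf : Function.Injective f := by
    rw [injective_iff_map_eq_zero]
    intro a ha
    obtain ⟨r, rfl⟩ := Submodule.Quotient.mk_surjective _ a
    have h1 : (Submodule.Quotient.mk r : R ⧸ A) = 0 := congrArg Prod.fst ha
    have h2 : (Submodule.Quotient.mk r : R ⧸ B) = 0 := congrArg Prod.snd ha
    rw [Submodule.Quotient.mk_eq_zero] at h1 h2 ⊢
    exact ⟨h1, h2⟩
  have hgmk : ∀ r s : R, g (Submodule.Quotient.mk r, Submodule.Quotient.mk s) =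
      Submodule.Quotient.mk (r - s) := by
    intro r s
    rw [Submodule.Quotient.mk_sub, sub_eq_add_neg]
    rfl
  have hg : Function.Surjective g := by
    intro a
    obtain ⟨r, rfl⟩ := Submodule.Quotient.mk_surjective _ a
    exact ⟨(Submodule.Quotient.mk r, Submodule.Quotient.mk 0), by rw [hgmk, sub_zero]⟩
  have h : Function.Exact f g := by
    rintro ⟨a, b⟩
    obtain ⟨r, rfl⟩ := Submodule.Quotient.mk_surjective _ a
    obtain ⟨s, rfl⟩ := Submodule.Quotient.mk_surjective _ b
    rw [hgmk]
    constructor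
    · intro ha
      rw [Submodule.Quotient.mk_eq_zero, Submodule.mem_sup] at ha
      obtain ⟨y, hy, z, hz, e⟩ := ha
      refine ⟨Submodule.Quotient.mk (r - y), Prod.ext ?_ ?_⟩
      · change (Submodule.Quotient.mk (r - y) : R ⧸ A) = Submodule.Quotient.mk r
        rw [eq_comm, Submodule.Quotient.eq]
        simpa using hy
      · change (Submodule.Quotient.mk (r - y) : R ⧸ B) = Submodule.Quotient.mk s
        rw [Submodule.Quotient.eq]
        have : r - y - s = z := by linear_combination -e
        rwa [this]
    · rintro ⟨c, hc⟩
      obtain ⟨t, rfl⟩ := Submodule.Quotient.mk_surjective _ c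
      have h1 : (Submodule.Quotient.mk t : R ⧸ A) = Submodule.Quotient.mk r := congrArg Prod.fst hc
      have h2 : (Submodule.Quotient.mk t : R ⧸ B) = Submodule.Quotient.mk s := congrArg Prod.snd hc
      rw [Submodule.Quotient.eq] at h1 h2
      rw [Submodule.Quotient.mk_eq_zero]
      have : r - s = -(t - r) + (t - s) := by ring
      rw [this]
      exact Submodule.add_mem_sup (neg_mem h1) h2
  exact ⟨_, ModuleCat.shortExact_of_linearMap f g hf hg h, rfl, rfl, rfl⟩

theorem ExtVanish.sup {A B : Ideal R} (h : ExtVanish (cyclicMod (A ⊓ B)) N i)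
    (hA : ExtVanish (cyclicMod A) N (i + 1)) (hB : ExtVanish (cyclicMod B) N (i + 1)) :
    ExtVanish (cyclicMod (A ⊔ B)) N (i + 1) := by
  obtain ⟨S, hS, h₁, h₂, h₃⟩ := shortExact_inf_sup A B
  rw [← h₃]
  exact ExtVanish.X₃ hS (h₁ ▸ h) (h₂ ▸ hA.prod hB)

theorem ExtVanish.colon {C J : Ideal R} {x : R} (hC : IsColonOf C J x)
    (hx : ∀ n : N, x • n = n) (h : ExtVanish (cyclicMod J) N i) : ExtVanish (cyclicMod C) N i := by
  obtain ⟨hz, hS⟩ := shortExact_colon hC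
  refine ExtVanish.X₁ hS h (ExtVanish.of_smul (r := x) ?_ hx)
  intro m
  obtain ⟨r, rfl⟩ := Submodule.Quotient.mk_surjective _ m
  change (Submodule.Quotient.mk (x * r) : R ⧸ (J ⊔ Ideal.span {x})) = 0
  rw [Submodule.Quotient.mk_eq_zero]
  exact Ideal.mul_mem_right _ _ (Ideal.mem_sup_right (Ideal.mem_span_singleton_self x))

/-- `pd (R ⧸ J) ≤ d`. -/
def PdLE (J : Ideal R) (d : ℕ) : Prop :=
  ∀ (N : ModuleCat.{0} R) (i : ℕ), d < i → ExtVanish (cyclicMod J) N i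

theorem PdLE.mono {J : Ideal R} {d e : ℕ} (h : PdLE J d) (hde : d ≤ e) : PdLE J e :=
  fun N i hi => h N i (by lia)

theorem PdLE.hasProjectiveDimensionLT {J : Ideal R} {d : ℕ} (h : PdLE J d) :
    HasProjectiveDimensionLT (cyclicMod J) (d + 1) :=
  HasProjectiveDimensionLT.mk fun i hi N e => h N i hi e

theorem pdLE_bot : PdLE (⊥ : Ideal R) 0 := by
  intro N i hi e
  have : Module.Projective R (R ⧸ (⊥ : Ideal R)) :=
    Module.Projective.of_equiv (Submodule.quotEquivOfEqBot (⊥ : Ideal R) rfl).symm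
  have : Projective (cyclicMod (⊥ : Ideal R)) := by
    rw [← IsProjective.iff_projective]; exact this
  obtain ⟨i, rfl⟩ : ∃ j, i = j + 1 := ⟨i - 1, by lia⟩
  exact e.eq_zero_of_projective

theorem PdLE.of_colon {C J : Ideal R} {x : R} {d : ℕ} (hC : IsColonOf C J x) (h₁ : PdLE C d)
    (h₂ : PdLE (J ⊔ Ideal.span {x}) d) : PdLE J d := by
  obtain ⟨hz, hS⟩ := shortExact_colon hC
  exact fun N i hi => ExtVanish.X₂ hS (h₁ N i hi) (h₂ N i hi)

theorem PdLE.sup_span_singleton {J : Ideal R} {x : R} {d : ℕ} (hC : IsColonOf J J x)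
    (h : PdLE J d) : PdLE (J ⊔ Ideal.span {x}) (d + 1) := by
  obtain ⟨hz, hS⟩ := shortExact_colon hC
  intro N i hi
  obtain ⟨i, rfl⟩ : ∃ j, i = j + 1 := ⟨i - 1, by lia⟩
  exact ExtVanish.X₃ hS (h N i (by lia)) (h N _ (by lia))

theorem ExtVanish.of_sup_span_singleton_left {J : Ideal R} {x : R} (hC : IsColonOf J J x)
    (hx : ∀ n : N, x • n = 0) (h : ExtVanish (cyclicMod (J ⊔ Ideal.span {x})) N (i + 1)) :
    ExtVanish (cyclicMod J) N i := by
  obtain ⟨hz, hS⟩ := shortExact_colon hC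
  intro e
  obtain ⟨y, hy⟩ := Abelian.Ext.contravariant_sequence_exact₁ hS _ e (add_comm 1 i) (h _)
  rw [← hy]
  change (Abelian.Ext.mk₀ (ModuleCat.ofHom (colonMap hC))).comp y _ = 0
  rw [colonMap_self, ← Abelian.Ext.smul_eq_mk₀_comp]
  exact Abelian.Ext.smul_eq_zero_of_right hx y

theorem ExtVanish.right_of_regular {J : Ideal R} {x : R} (hC : IsColonOf J J x) {k : ℕ}
    (hx : ∀ m : M, x ^ k • m = 0)
    (h : ∀ j, j + 1 = i → ExtVanish M (cyclicMod (J ⊔ Ideal.span {x})) j) :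
    ExtVanish M (cyclicMod J) i := by
  obtain ⟨hz, hS⟩ := shortExact_colon hC
  have key : ∀ e : Abelian.Ext M (cyclicMod J) i, x • e = 0 → e = 0 := by
    intro e he
    have he' : e.comp (Abelian.Ext.mk₀ (ModuleCat.ofHom (colonMap hC))) (add_zero i) = 0 := by
      rw [colonMap_self, ← Abelian.Ext.smul_eq_comp_mk₀, he]
    obtain _ | i := i
    · have := hS.mono_f
      apply Abelian.Ext.postcomp_mk₀_injective_of_mono M (ModuleCat.ofHom (colonMap hC)) (hf := this)
      simpa using he'
    · obtain ⟨y, hy⟩ := Abelian.Ext.covariant_sequence_exact₁ _ hS e he' rfl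
      rw [← hy, h i rfl y, Abelian.Ext.zero_comp]
  intro e
  have : ∀ k, x ^ k • e = 0 → e = 0 := by
    intro k
    induction k with
    | zero => intro h; simpa using h
    | succ k ih => intro h; rw [pow_succ', mul_smul] at h; exact ih (key _ h)
  exact this k (Abelian.Ext.smul_eq_zero_of_left hx e)

theorem ExtVanish.right_sup_of_regular {J : Ideal R} {x : R} (hC : IsColonOf J J x)
    (h : ExtVanish M (cyclicMod J) i) (h' : ExtVanish M (cyclicMod J) (i + 1)) :
    ExtVanish M (cyclicMod (J ⊔ Ideal.span {x})) i := by
  obtain ⟨hz, hS⟩ := shortExact_colon hC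
  intro e
  obtain ⟨y, hy⟩ := Abelian.Ext.covariant_sequence_exact₃ _ hS e rfl (h' _)
  rw [← hy, h y, Abelian.Ext.zero_comp]

/-- `l` is a regular sequence on `R ⧸ J` (properness not required). -/
def IsRegularSeqOn : Ideal R → List R → Prop
  | _, [] => True
  | J, x :: l => IsColonOf J J x ∧ IsRegularSeqOn (J ⊔ Ideal.span {x}) l

/-- The ideal generated by `J` and the elements of `l`. -/
def supList : Ideal R → List R → Ideal R
  | J, [] => J
  | J, x :: l => supList (J ⊔ Ideal.span {x}) l

theorem supList_eq (J : Ideal R) (l : List R) : supList J l = J ⊔ Ideal.span {x | x ∈ l} := by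
  induction l generalizing J with
  | nil => simp [supList]
  | cons a l ih =>
    rw [supList, ih, sup_assoc, ← Ideal.span_union]
    congr 2
    ext x; simp

theorem ExtVanish.of_supList {J : Ideal R} {l : List R} (hl : IsRegularSeqOn J l)
    (hN : ∀ x ∈ l, ∀ n : N, x • n = 0) (h : ExtVanish (cyclicMod (supList J l)) N (i + l.length)) :
    ExtVanish (cyclicMod J) N i := by
  induction l generalizing J i with
  | nil => exact h
  | cons x l ih =>
    refine ExtVanish.of_sup_span_singleton_left hl.1 (hN x (by simp)) (ih hl.2
      (fun y hy => hN y (by simp [hy])) ?_)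
    rwa [add_assoc, add_comm 1]

theorem ExtVanish.of_lt_length {J : Ideal R} {l : List R} (hl : IsRegularSeqOn J l)
    (hM : ∀ x ∈ l, ∃ k : ℕ, ∀ m : M, x ^ k • m = 0) (hi : i < l.length) :
    ExtVanish M (cyclicMod J) i := by
  induction l generalizing J i with
  | nil => simp at hi
  | cons x l ih =>
    obtain ⟨k, hk⟩ := hM x (by simp)
    refine ExtVanish.right_of_regular hl.1 hk fun j hj => ih hl.2
      (fun y hy => hM y (by simp [hy])) ?_
    simp at hi; lia

theorem ExtVanish.zero_of_length {J : Ideal R} {l : List R} (hl : IsRegularSeqOn J l)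
    (hM : ∀ x ∈ l, ∃ k : ℕ, ∀ m : M, x ^ k • m = 0) (h : ExtVanish M (cyclicMod J) l.length) :
    ExtVanish M (cyclicMod (supList J l)) 0 := by
  induction l generalizing J with
  | nil => exact h
  | cons x l ih =>
    exact ih hl.2 (fun y hy => hM y (by simp [hy]))
      (ExtVanish.right_sup_of_regular hl.1 (ExtVanish.of_lt_length hl hM (by simp)) h)

theorem eq_zero_of_extVanish_zero (h : ExtVanish M N 0) (f : M ⟶ N) : f = 0 := by
  have := h (Abelian.Ext.mk₀ f)
  simpa using this

end ExtVanishing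

section LocalCohomology

variable {R : Type} [CommRing R]

/-- The differentials of an injective resolution, as linear maps. -/
noncomputable def injDiff {M : ModuleCat.{0} R} (P : InjectiveResolution M) (i : ℕ) :
    P.cocomplex.X i →ₗ[R] P.cocomplex.X (i + 1) := (P.cocomplex.d i (i + 1)).hom

theorem injective_injRes {M : ModuleCat.{0} R} (P : InjectiveResolution M) (i : ℕ) :
    Module.Injective R (P.cocomplex.X i) :=
  have : Injective (ModuleCat.of R (P.cocomplex.X i)) := P.injective i
  Module.injective_module_of_injective_object R _

theorem injDiff_injDiff {M : ModuleCat.{0} R} (P : InjectiveResolution M) (i : ℕ)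
    (x : P.cocomplex.X i) : injDiff P (i + 1) (injDiff P i x) = 0 := by
  have := P.cocomplex.d_comp_d i (i + 1) (i + 2)
  exact congrArg (fun f => f.hom x) this

theorem exists_injDiff_eq {M : ModuleCat.{0} R} (P : InjectiveResolution M) (i : ℕ)
    (z : P.cocomplex.X (i + 1)) (hz : injDiff P (i + 1) z = 0) : ∃ y, injDiff P i y = z := by
  have := P.cocomplex_exactAt_succ i
  rw [HomologicalComplex.exactAt_iff' _ i (i + 1) (i + 2) (by simp) (by simp),
    ShortComplex.moduleCat_exact_iff] at this
  exact this z hz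

theorem smul_pow_eq_zero_of_span {l : List R} {M : Type} [AddCommGroup M] [Module R M] {t : ℕ}
    (h : ∀ r ∈ Ideal.span {x : R | x ∈ l} ^ t, ∀ m : M, r • m = 0) :
    ∀ x ∈ l, ∃ k : ℕ, ∀ m : M, x ^ k • m = 0 :=
  fun _ hx => ⟨t, h _ (Ideal.pow_mem_pow (Ideal.subset_span (s := {x : R | x ∈ l}) hx) t)⟩

theorem not_torsionExact_of_isRegularSeqOn [IsNoetherianRing R] {l : List R}
    (P : InjectiveResolution (cyclicMod (⊥ : Ideal R)))
    (hl : IsRegularSeqOn (⊥ : Ideal R) l) (hne : Ideal.span {x : R | x ∈ l} ≠ ⊤) {q : ℕ}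
    (hq : l.length = q + 1) :
    ¬ TorsionExact (injDiff P) (Ideal.span {x : R | x ∈ l}) q := by
  intro H
  set 𝔪 := Ideal.span {x : R | x ∈ l} with h𝔪
  have hnz : ¬ ExtVanish (cyclicMod 𝔪) (cyclicMod (⊥ : Ideal R)) (q + 1) := by
    intro h
    rw [← hq] at h
    have h0 := ExtVanish.zero_of_length hl (smul_pow_eq_zero_of_span (t := 1) (by
      intro r hr m
      obtain ⟨s, rfl⟩ := Submodule.Quotient.mk_surjective _ m
      change (Submodule.Quotient.mk (r * s) : R ⧸ 𝔪) = 0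
      rw [Submodule.Quotient.mk_eq_zero]
      rw [pow_one] at hr
      exact Ideal.mul_mem_right _ _ hr)) h
    rw [supList_eq, bot_sup_eq] at h0
    have h1 : (1 : R ⧸ 𝔪) = 0 :=
      congrArg (fun f => f.hom 1) (eq_zero_of_extVanish_zero h0 (𝟙 (cyclicMod 𝔪)))
    have h2 : (Submodule.Quotient.mk 1 : R ⧸ 𝔪) = 0 := h1
    rw [Submodule.Quotient.mk_eq_zero, ← Ideal.eq_top_iff_one] at h2
    exact hne h2
  refine hnz fun e => ?_
  obtain ⟨f, hf, rfl⟩ := P.extMk_surjective e (q + 2) rfl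
  let z : P.cocomplex.X (q + 1) := f.hom (Submodule.Quotient.mk (1 : R) : R ⧸ 𝔪)
  have hz : IsPowTorsion 𝔪 z := by
    refine le_trans ?_ Ideal.le_radical
    intro r hr
    rw [Ideal.mem_torsionOf_iff]
    change r • f.hom _ = 0
    rw [← map_smul]
    have : r • (Submodule.Quotient.mk (1 : R) : R ⧸ 𝔪) = 0 := by
      rw [← Submodule.Quotient.mk_smul, Submodule.Quotient.mk_eq_zero]
      simpa using hr
    rw [this, map_zero]
  have hdz : injDiff P (q + 1) z = 0 :=
    congrArg (fun g => g.hom (Submodule.Quotient.mk (1 : R) : R ⧸ 𝔪)) hf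
  obtain ⟨y, hy, hyz⟩ := H z hz hdz
  obtain ⟨t, ht⟩ := hy.exists_pow_le
  have hle : 𝔪 ^ (t + 1) ≤ 𝔪 := Ideal.pow_le_self (by lia)
  let π : (R ⧸ 𝔪 ^ (t + 1)) →ₗ[R] (R ⧸ 𝔪) := Submodule.factor hle
  let g : (R ⧸ 𝔪 ^ (t + 1)) →ₗ[R] P.cocomplex.X q :=
    Submodule.liftQ (𝔪 ^ (t + 1)) (LinearMap.toSpanSingleton R _ y) (by
      intro r hr
      exact ht (Ideal.pow_le_pow_right (by lia) hr))
  have hS := ModuleCat.shortExact_of_linearMap (LinearMap.ker π).subtype π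
    (Submodule.injective_subtype _) (Submodule.factor_surjective hle)
    (LinearMap.exact_subtype_ker_map π)
  have hzero : (Abelian.Ext.mk₀ (ModuleCat.ofHom π)).comp (P.extMk f (q + 2) rfl hf)
      (zero_add _) = 0 := by
    rw [InjectiveResolution.mk₀_comp_extMk, P.extMk_eq_zero_iff _ _ _ _ q rfl]
    refine ⟨ModuleCat.ofHom g, ModuleCat.hom_ext (LinearMap.ext fun a => ?_)⟩
    obtain ⟨r, rfl⟩ := Submodule.Quotient.mk_surjective _ a
    change injDiff P q (r • y) = f.hom (Submodule.Quotient.mk r : R ⧸ 𝔪)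
    rw [map_smul, hyz]
    change r • f.hom _ = _
    rw [← map_smul, ← Submodule.Quotient.mk_smul]
    simp
  obtain ⟨x₁, hx₁⟩ := Abelian.Ext.contravariant_sequence_exact₃ hS _ _ hzero (add_comm 1 q)
  have hv : ExtVanish (ModuleCat.of R (LinearMap.ker π)) (cyclicMod (⊥ : Ideal R)) q := by
    refine ExtVanish.of_lt_length hl (smul_pow_eq_zero_of_span (t := t + 1) ?_) (by lia)
    rintro r hr ⟨m, hm⟩
    refine Subtype.ext ?_
    change r • m = 0
    obtain ⟨s, rfl⟩ := Submodule.Quotient.mk_surjective _ m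
    rw [← Submodule.Quotient.mk_smul, Submodule.Quotient.mk_eq_zero]
    exact Ideal.mul_mem_right _ _ hr
  rw [← hx₁, hv x₁, Abelian.Ext.comp_zero]

/-- `J` is generated up to radical by `s` elements. -/
def AraLE (J : Ideal R) (s : ℕ) : Prop :=
  ∃ f : Fin s → R, (Ideal.span (Set.range f)).radical = J.radical

theorem AraLE.torsionExact [IsNoetherianRing R] {J : Ideal R} {s : ℕ} (h : AraLE J s)
    {M : ModuleCat.{0} R} (P : InjectiveResolution M) {i : ℕ} (hi : s ≤ i) :
    TorsionExact (injDiff P) J i := by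
  obtain ⟨f, hf⟩ := h
  exact (torsionExact_span_range (injective_injRes P) (injDiff_injDiff P) (exists_injDiff_eq P)
    f hi).congr hf

end LocalCohomology

section SquarefreeIdeal

variable {K : Type} [Field K] {V : Type}

/-- The squarefree monomial ideal spanned by the monomials whose support satisfies `Q`. -/
noncomputable def sqIdeal (K : Type) [Field K] {V : Type} (Q : Set V → Prop) :
    Ideal (MvPolynomial V K) :=
  Ideal.span ((fun m : V →₀ ℕ => monomial m (1 : K)) '' {m | Q (m.support : Set V)})

theorem mem_sqIdeal {Q : Set V → Prop} (hQ : Monotone Q) {p : MvPolynomial V K} :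
    p ∈ sqIdeal K Q ↔ ∀ m ∈ p.support, Q (m.support : Set V) := by
  rw [sqIdeal, mem_ideal_span_monomial_image]
  constructor
  · intro h m hm
    obtain ⟨m', hm', hle⟩ := h m hm
    exact hQ (by exact_mod_cast Finsupp.support_mono hle) hm'
  · exact fun h m hm => ⟨m, h m hm, le_rfl⟩

theorem sqIdeal_mono {Q Q' : Set V → Prop} (h : ∀ u, Q u → Q' u) :
    sqIdeal K Q ≤ sqIdeal K Q' :=
  Ideal.span_mono (Set.image_mono fun _ hm => h _ hm)

theorem sqIdeal_congr {Q Q' : Set V → Prop} (h : ∀ u, Q u ↔ Q' u) :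
    sqIdeal K Q = sqIdeal K Q' :=
  congrArg _ (funext fun u => propext (h u))

theorem sqIdeal_sup (Q Q' : Set V → Prop) :
    sqIdeal K Q ⊔ sqIdeal K Q' = sqIdeal K (fun u => Q u ∨ Q' u) := by
  rw [sqIdeal, sqIdeal, ← Ideal.span_union, ← Set.image_union]
  rfl

theorem sqIdeal_inf {Q Q' : Set V → Prop} (hQ : Monotone Q) (hQ' : Monotone Q') :
    sqIdeal K Q ⊓ sqIdeal K Q' = sqIdeal K (fun u => Q u ∧ Q' u) := by
  ext p
  rw [Ideal.mem_inf, mem_sqIdeal hQ, mem_sqIdeal hQ',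
    mem_sqIdeal (fun u w h hu => ⟨hQ h hu.1, hQ' h hu.2⟩)]
  exact ⟨fun h m hm => ⟨h.1 m hm, h.2 m hm⟩, fun h => ⟨fun m hm => (h m hm).1, fun m hm => (h m hm).2⟩⟩

theorem monotone_mem (v : V) : Monotone (fun u : Set V => v ∈ u) := fun _ _ h hv => h hv

theorem sqIdeal_mem (v : V) : sqIdeal K (fun u => v ∈ u) = Ideal.span {X v} := by
  ext p
  rw [mem_sqIdeal (monotone_mem v)]
  have := mem_ideal_span_X_image (R := K) (s := {v}) (x := p)
  rw [Set.image_singleton] at this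
  rw [this]
  simp

theorem sqIdeal_false : sqIdeal K (fun _ : Set V => False) = ⊥ := by
  simp [sqIdeal]

theorem sqIdeal_sup_span (Q : Set V → Prop) (v : V) :
    sqIdeal K Q ⊔ Ideal.span {X v} = sqIdeal K (fun u => Q u ∨ v ∈ u) := by
  rw [← sqIdeal_mem, sqIdeal_sup]

theorem monotone_insert {Q : Set V → Prop} (hQ : Monotone Q) (v : V) :
    Monotone (fun u => Q (insert v u)) := fun _ _ h => hQ (Set.insert_subset_insert h)

theorem support_single_add_coe (v : V) (m : V →₀ ℕ) :
    (((Finsupp.single v 1 + m).support : Finset V) : Set V) = insert v (m.support : Set V) := by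
  classical
  ext w
  simp only [Finset.mem_coe, Finsupp.mem_support_iff, Finsupp.add_apply, Set.mem_insert_iff,
    Finsupp.single_apply]
  by_cases h : v = w
  · simp [h]
  · simp [h, Ne.symm h]

theorem isColonOf_sqIdeal {Q : Set V → Prop} (hQ : Monotone Q) (v : V) :
    IsColonOf (sqIdeal K (fun u => Q (insert v u))) (sqIdeal K Q) (X v) := by
  intro r
  rw [mem_sqIdeal hQ, mem_sqIdeal (monotone_insert hQ v), support_X_mul]
  simp only [Finset.mem_map, addLeftEmbedding_apply, forall_exists_index, and_imp,
    forall_apply_eq_imp_iff₂, support_single_add_coe]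

theorem isColonOf_sqIdeal_self {Q : Set V → Prop} (hQ : Monotone Q) {v : V}
    (hv : ∀ u, Q (insert v u) → Q u) : IsColonOf (sqIdeal K Q) (sqIdeal K Q) (X v) := by
  have h := isColonOf_sqIdeal (K := K) hQ v
  rwa [sqIdeal_congr (Q' := Q) fun u => ⟨hv u, hQ (Set.subset_insert v u)⟩] at h

theorem X_mul_X_mem_sqIdeal {Q : Set V → Prop} {a b : V} (h : Q {a, b}) :
    X a * X b ∈ sqIdeal K Q := by
  refine Ideal.subset_span ⟨Finsupp.single a 1 + Finsupp.single b 1, ?_, ?_⟩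
  · change Q _
    rw [support_single_add_coe]
    rw [Finsupp.support_single _ one_ne_zero]
    simpa using h
  · change monomial _ _ = _
    rw [← mul_one (1 : K), ← monomial_mul]
    rfl

theorem X_mem_sqIdeal {Q : Set V → Prop} {a : V} (h : Q {a}) :
    X a ∈ sqIdeal K Q := by
  refine Ideal.subset_span ⟨Finsupp.single a 1, ?_, rfl⟩
  change Q _
  rw [Finsupp.support_single _ one_ne_zero]
  simpa using h

theorem sqIdeal_edge {a b : V} (hab : a ≠ b) :
    sqIdeal K (fun u => a ∈ u ∧ b ∈ u) = Ideal.span {X a * X b} := by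
  apply le_antisymm
  · rw [sqIdeal, Ideal.span_le]
    rintro _ ⟨m, ⟨ha, hb⟩, rfl⟩
    rw [SetLike.mem_coe, Ideal.mem_span_singleton]
    have ha' : m a ≠ 0 := by simpa using ha
    have hb' : m b ≠ 0 := by simpa using hb
    have hle : Finsupp.single a 1 + Finsupp.single b 1 ≤ m := by
      classical
      intro w
      simp only [Finsupp.add_apply, Finsupp.single_apply]
      split_ifs with h1 h2 h2 <;> subst_vars <;> first | exact absurd rfl hab | lia
    obtain ⟨c, rfl⟩ := exists_add_of_le hle
    refine ⟨monomial c 1, ?_⟩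
    rw [X, X, monomial_mul, monomial_mul]
    simp
  · rw [Ideal.span_le, Set.singleton_subset_iff]
    exact X_mul_X_mem_sqIdeal (by simp)

/-- Containment of a squarefree monomial ideal in a prime, read off from the set of
variables outside the prime. -/
theorem sqIdeal_le_prime [Finite V] {Q : Set V → Prop} (hQ : Monotone Q)
    {P : Ideal (MvPolynomial V K)} (hP : P.IsPrime) :
    sqIdeal K Q ≤ P ↔ ¬ Q {v | X v ∉ P} := by
  classical
  have hmono : ∀ m : V →₀ ℕ, monomial m (1 : K) ∈ P ↔ ¬ (m.support : Set V) ⊆ {v | X v ∉ P} := by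
    intro m
    rw [monomial_eq, C_1, one_mul, Finsupp.prod, hP.prod_mem_iff]
    constructor
    · rintro ⟨v, hv, h⟩ hs
      exact hs hv (hP.mem_of_pow_mem _ h)
    · intro h
      rw [Set.not_subset] at h
      obtain ⟨v, hv, h⟩ := h
      refine ⟨v, hv, Ideal.pow_mem_of_mem _ (by simpa using h) _ ?_⟩
      have : m v ≠ 0 := by simpa using hv
      lia
  constructor
  · intro h hS
    have hfin : Set.Finite {v : V | (X v : MvPolynomial V K) ∉ P} := Set.toFinite _
    let m : V →₀ ℕ := Finsupp.indicator hfin.toFinset (fun _ _ => 1)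
    have hm : (m.support : Set V) = {v | X v ∉ P} := by
      ext v
      simp [m, Finsupp.indicator_apply]
    have h1 : monomial m (1 : K) ∈ P :=
      h (Ideal.subset_span ⟨m, by simpa only [Set.mem_ofPred_eq, hm] using hS, rfl⟩)
    exact (hmono m).1 h1 hm.le
  · intro h
    rw [sqIdeal, Ideal.span_le]
    rintro _ ⟨m, hm, rfl⟩
    exact (hmono m).2 fun hs => h (hQ hs hm)

theorem araLE_of_list {R : Type} [CommRing R] {J : Ideal R} {s : ℕ} (F : List R)
    (hF : F.length ≤ s) (h : (Ideal.span {x | x ∈ F}).radical = J.radical) : AraLE J s := by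
  refine ⟨fun i => F.getD i 0, ?_⟩
  rw [← h]
  congr 1
  apply le_antisymm
  · rw [Ideal.span_le]
    rintro _ ⟨i, rfl⟩
    change F.getD i 0 ∈ _
    by_cases hi : (i : ℕ) < F.length
    · rw [List.getD_eq_getElem _ _ hi]
      exact Ideal.subset_span (List.getElem_mem hi)
    · rw [List.getD_eq_default _ _ (by lia)]
      exact zero_mem _
  · rw [Ideal.span_le]
    intro x hx
    obtain ⟨i, hi, rfl⟩ := List.getElem_of_mem hx
    refine Ideal.subset_span ⟨⟨i, by lia⟩, ?_⟩
    exact List.getD_eq_getElem _ _ hi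

theorem AraLE.map {R R' : Type} [CommRing R] [CommRing R'] {J : Ideal R} {s : ℕ} (h : AraLE J s)
    (f : R →+* R') : AraLE (J.map f) s := by
  obtain ⟨F, e⟩ := h
  have key : ∀ I J : Ideal R, I.radical ≤ J.radical → (I.map f).radical ≤ (J.map f).radical := by
    intro I J h
    rw [Ideal.radical_le_radical_iff]
    exact (Ideal.map_mono (Ideal.le_radical.trans h)).trans (Ideal.map_radical_le f)
  refine ⟨f ∘ F, ?_⟩
  rw [Set.range_comp, ← Ideal.map_span]
  exact le_antisymm (key _ _ e.le) (key _ _ e.ge)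

theorem araLE_sqIdeal [Finite V] {Q : Set V → Prop} (hQ : Monotone Q) {s : ℕ}
    (F : List (MvPolynomial V K)) (hF : F.length ≤ s) (hmem : ∀ f ∈ F, f ∈ sqIdeal K Q)
    (h : ∀ P : Ideal (MvPolynomial V K), P.IsPrime → (∀ f ∈ F, f ∈ P) → ¬ Q {v | X v ∉ P}) :
    AraLE (sqIdeal K Q) s := by
  refine araLE_of_list F hF (le_antisymm (Ideal.radical_mono (Ideal.span_le.2 hmem)) ?_)
  rw [Ideal.radical_le_radical_iff, Ideal.radical_eq_sInf]
  refine le_sInf ?_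
  rintro P ⟨hle, hP⟩
  exact (sqIdeal_le_prime hQ hP).2 (h P hP fun f hf => hle (Ideal.subset_span hf))

open scoped Classical in
/-- Substituting `1` for the variable `v`. -/
noncomputable def substOne (K : Type) [Field K] {V : Type} (v : V) :
    MvPolynomial V K →ₐ[K] MvPolynomial V K :=
  aeval (fun w => if w = v then 1 else X w)

theorem map_substOne_sqIdeal {Q : Set V → Prop} (hQ : Monotone Q) (v : V) :
    (sqIdeal K Q).map (substOne K v).toRingHom = sqIdeal K (fun u => Q (insert v u)) := by
  classical
  have hmon : ∀ m : V →₀ ℕ, substOne K v (monomial m 1) = monomial (m.erase v) 1 := by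
    intro m
    rw [substOne, aeval_monomial, map_one, one_mul, monomial_eq, C_1, one_mul]
    by_cases hv : v ∈ m.support
    · rw [Finsupp.prod, ← Finset.mul_prod_erase _ _ hv, Finsupp.prod, Finsupp.support_erase]
      simp only [if_true, one_pow, one_mul]
      refine Finset.prod_congr rfl fun w hw => ?_
      have : w ≠ v := Finset.ne_of_mem_erase hw
      rw [if_neg this, Finsupp.erase_ne this]
    · rw [Finsupp.erase_of_notMem_support hv]
      refine Finset.prod_congr rfl fun w hw => ?_
      have : w ≠ v := fun h => hv (h ▸ hw)
      simp only [if_neg this]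
  apply le_antisymm
  · rw [sqIdeal, Ideal.map_span, Ideal.span_le]
    rintro _ ⟨_, ⟨m, hm, rfl⟩, rfl⟩
    change substOne K v (monomial m 1) ∈ _
    rw [hmon]
    refine Ideal.subset_span ⟨m.erase v, ?_, rfl⟩
    refine hQ ?_ hm
    intro w hw
    by_cases h : w = v
    · exact Or.inl h
    · right
      simpa [h] using hw
  · rw [sqIdeal, Ideal.span_le]
    rintro _ ⟨m, hm, rfl⟩
    have hmem : monomial (Finsupp.single v 1 + m) (1 : K) ∈ sqIdeal K Q :=
      Ideal.subset_span ⟨_, by rw [Set.mem_ofPred_eq, support_single_add_coe]; exact hm, rfl⟩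
    have h1 := Ideal.mem_map_of_mem (substOne K v).toRingHom hmem
    change substOne K v (monomial _ 1) ∈ _ at h1
    rw [hmon] at h1
    have hle : (Finsupp.single v 1 + m).erase v ≤ m := by
      intro w
      by_cases h : w = v
      · simp [h]
      · simp [Finsupp.erase_ne h]
    obtain ⟨c, hc⟩ := exists_add_of_le hle
    have : monomial m (1 : K) = monomial c 1 * monomial ((Finsupp.single v 1 + m).erase v) 1 := by
      rw [monomial_mul, one_mul, add_comm, ← hc]
    change monomial m 1 ∈ _
    rw [this]
    exact Ideal.mul_mem_left _ _ h1

end SquarefreeIdeal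

section PathPredicates

variable {V : Type}

/-- `u` contains two consecutive vertices of the walk. -/
def PathQ : List V → Set V → Prop
  | a :: b :: l, u => (a ∈ u ∧ b ∈ u) ∨ PathQ (b :: l) u
  | _, _ => False

/-- `u` contains two consecutive vertices of the closed walk `c, l, c`. -/
def CycQ (c : V) (l : List V) (u : Set V) : Prop := PathQ (c :: l ++ [c]) u

/-- `u` meets the list. -/
def VarQ (l : List V) (u : Set V) : Prop := ∃ v ∈ l, v ∈ u

@[simp] theorem pathQ_nil (u : Set V) : PathQ [] u ↔ False := by simp [PathQ]

@[simp] theorem pathQ_singleton (a : V) (u : Set V) : PathQ [a] u ↔ False := by simp [PathQ]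

@[simp] theorem pathQ_cons_cons (a b : V) (l : List V) (u : Set V) :
    PathQ (a :: b :: l) u ↔ (a ∈ u ∧ b ∈ u) ∨ PathQ (b :: l) u := by simp [PathQ]

@[simp] theorem varQ_nil (u : Set V) : VarQ [] u ↔ False := by simp [VarQ]

@[simp] theorem varQ_cons (a : V) (l : List V) (u : Set V) :
    VarQ (a :: l) u ↔ a ∈ u ∨ VarQ l u := by simp [VarQ]

@[simp] theorem varQ_append (l l' : List V) (u : Set V) :
    VarQ (l ++ l') u ↔ VarQ l u ∨ VarQ l' u := by
  simp [VarQ, or_and_right, exists_or]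

theorem monotone_pathQ : ∀ l : List V, Monotone (PathQ l)
  | [] => fun _ _ _ h => h
  | [_] => fun _ _ _ h => h
  | _ :: b :: l => fun _ _ h =>
    Or.imp (And.imp (fun x => h x) fun x => h x) (monotone_pathQ (b :: l) h)

theorem monotone_cycQ (c : V) (l : List V) : Monotone (CycQ c l) := monotone_pathQ _

theorem monotone_varQ (l : List V) : Monotone (VarQ l) :=
  fun _ _ h ⟨v, hv, hu⟩ => ⟨v, hv, h hu⟩

theorem Monotone.or {Q Q' : Set V → Prop} (h : Monotone Q) (h' : Monotone Q') :
    Monotone fun u => Q u ∨ Q' u := fun _ _ hu => Or.imp (h hu) (h' hu)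

theorem Monotone.and {Q Q' : Set V → Prop} (h : Monotone Q) (h' : Monotone Q') :
    Monotone fun u => Q u ∧ Q' u := fun _ _ hu => And.imp (h hu) (h' hu)

theorem pathQ_congr {u u' : Set V} :
    ∀ {l : List V}, (∀ v ∈ l, v ∈ u ↔ v ∈ u') → (PathQ l u ↔ PathQ l u')
  | [], _ => Iff.rfl
  | [_], _ => Iff.rfl
  | a :: b :: l, h => by
    rw [pathQ_cons_cons, pathQ_cons_cons, h a (by simp), h b (by simp),
      pathQ_congr fun v hv => h v (List.mem_cons_of_mem _ hv)]

theorem varQ_congr {u u' : Set V} {l : List V} (h : ∀ v ∈ l, v ∈ u ↔ v ∈ u') :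
    VarQ l u ↔ VarQ l u' :=
  exists_congr fun v => and_congr_right fun hv => h v hv

theorem pathQ_insert {l : List V} {v : V} (hv : v ∉ l) (u : Set V) :
    PathQ l (insert v u) ↔ PathQ l u :=
  pathQ_congr fun w hw => by
    rw [Set.mem_insert_iff, or_iff_right]
    rintro rfl
    exact hv hw

theorem varQ_insert {l : List V} {v : V} (hv : v ∉ l) (u : Set V) :
    VarQ l (insert v u) ↔ VarQ l u :=
  varQ_congr fun w hw => by
    rw [Set.mem_insert_iff, or_iff_right]
    rintro rfl
    exact hv hw

theorem pathQ_append_pair (l : List V) (a b : V) (u : Set V) :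
    PathQ (l ++ [a, b]) u ↔ PathQ (l ++ [a]) u ∨ (a ∈ u ∧ b ∈ u) := by
  induction l with
  | nil => simp
  | cons x l ih =>
    cases l with
    | nil => simp
    | cons y l =>
      simp only [List.cons_append, pathQ_cons_cons] at ih ⊢
      rw [ih, or_assoc]

theorem mem_or_pathQ_cons (a : V) (l : List V) (u : Set V) :
    a ∈ u ∨ PathQ (a :: l) u ↔ a ∈ u ∨ PathQ l u := by
  cases l with
  | nil => simp
  | cons b l => rw [pathQ_cons_cons]; tauto

theorem mem_or_pathQ_concat (l : List V) (a : V) (u : Set V) :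
    a ∈ u ∨ PathQ (l ++ [a]) u ↔ a ∈ u ∨ PathQ l u := by
  rcases List.eq_nil_or_concat l with rfl | ⟨l, b, rfl⟩
  · simp
  · rw [List.concat_eq_append, List.append_assoc, List.singleton_append, pathQ_append_pair]; tauto

theorem cycQ_cons_concat (c a : V) (w : List V) (z : V) (u : Set V) :
    CycQ c (a :: (w ++ [z])) u ↔
      (c ∈ u ∧ a ∈ u) ∨ PathQ (a :: (w ++ [z])) u ∨ (z ∈ u ∧ c ∈ u) := by
  have := pathQ_append_pair (a :: w) z c u
  simp only [List.cons_append] at this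
  simp only [CycQ, List.cons_append, List.append_assoc, pathQ_cons_cons, List.nil_append, this]

/-- Making `c` invertible turns its neighbours on the cycle into variables. -/
theorem cycQ_insert {c a : V} {w : List V} {z : V} (hc : c ∉ a :: (w ++ [z])) (u : Set V) :
    CycQ c (a :: (w ++ [z])) (insert c u) ↔ a ∈ u ∨ z ∈ u ∨ PathQ w u := by
  rw [cycQ_cons_concat, pathQ_insert hc]
  have h1 := mem_or_pathQ_cons a (w ++ [z]) u
  have h2 := mem_or_pathQ_concat w z u
  have ha : a ≠ c := fun h => hc (by simp [h])
  have hz : z ≠ c := fun h => hc (by simp [h])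
  simp only [Set.mem_insert_iff, true_or, true_and, ha, hz, false_or, and_true]
  tauto

theorem mem_or_cycQ (c : V) (l : List V) (u : Set V) :
    c ∈ u ∨ CycQ c l u ↔ c ∈ u ∨ PathQ l u := by
  rw [CycQ, List.cons_append, mem_or_pathQ_cons, mem_or_pathQ_concat]

/-- Inverting a suitable set of vertices of a path turns its edge ideal into an ideal
of variables. -/
theorem exists_dominating : ∀ l : List V, l.Nodup →
    ∃ D ws : List V, (D ++ ws).Perm l ∧
      (∀ u, PathQ l (u ∪ {v | v ∈ D}) ↔ VarQ ws u) ∧ ws.length = 2 * l.length / 3 ∧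
      (3 ∣ l.length → ∀ v, v ∈ l.head? ∨ v ∈ l.getLast? → v ∈ ws)
  | [], _ => ⟨[], [], by simp⟩
  | [a], _ => ⟨[a], [], by simp⟩
  | [a, b], h => by
    refine ⟨[a], [b], by simp, fun u => ?_, by simp, by simp⟩
    simp at h
    simp [Ne.symm h]
  | a :: b :: c :: l, h => by
    simp only [List.nodup_cons, List.mem_cons, not_or] at h
    obtain ⟨⟨hab, hac, hal⟩, ⟨hbc, hbl⟩, hcl, hl⟩ := h
    obtain ⟨D, ws, hp, hQ, hlen, hend⟩ := exists_dominating l hl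
    have haD : a ∉ D := fun h => hal (hp.subset (by simp [h]))
    have hcD : c ∉ D := fun h => hcl (hp.subset (by simp [h]))
    refine ⟨b :: D, a :: c :: ws, ?_, fun u => ?_, ?_, ?_⟩
    · have h1 : (D ++ a :: c :: ws).Perm (a :: c :: (D ++ ws)) :=
        List.perm_middle.trans (List.perm_middle.cons a)
      have h2 : (b :: a :: c :: (D ++ ws)).Perm (a :: b :: c :: l) :=
        (((hp.cons c).cons a).cons b).trans (List.Perm.swap a b (c :: l))
      rw [List.cons_append]
      exact (h1.cons b).trans h2
    · have e : u ∪ {v | v ∈ b :: D} = insert b (u ∪ {v | v ∈ D}) := by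
        ext v; simp; tauto
      have h1 := mem_or_pathQ_cons c l (insert b (u ∪ {v | v ∈ D}))
      have h2 := pathQ_insert hbl (u ∪ {v | v ∈ D})
      have h3 := hQ u
      have ha : a ∈ insert b (u ∪ {v | v ∈ D}) ↔ a ∈ u := by simp [hab, haD]
      have hb : b ∈ insert b (u ∪ {v | v ∈ D}) := by simp
      have hc : c ∈ insert b (u ∪ {v | v ∈ D}) ↔ c ∈ u := by simp [Ne.symm hbc, hcD]
      rw [hc, h2, h3] at h1
      rw [e, pathQ_cons_cons, pathQ_cons_cons, varQ_cons, varQ_cons, ha, hc, iff_true_intro hb,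
        and_true, true_and, h1]
    · simp [hlen]; lia
    · intro h3 v hv
      simp only [List.length_cons] at h3
      simp only [List.mem_cons]
      rcases hv with hv | hv
      · simp at hv; exact Or.inl hv.symm
      · rcases List.eq_nil_or_concat l with rfl | ⟨l', z, rfl⟩
        · simp at hv; exact Or.inr (Or.inl hv.symm)
        · right; right
          refine hend (by lia) v (Or.inr ?_)
          simpa [List.getLast?_cons] using hv

end PathPredicates

section PathPd

variable {K : Type} [Field K] {V : Type}

theorem mem_insert_iff_of_ne {v w : V} (h : w ≠ v) (u : Set V) : w ∈ insert v u ↔ w ∈ u := by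
  rw [Set.mem_insert_iff, or_iff_right h]

theorem PdLE.congr {Q Q' : Set V → Prop} {d e : ℕ} (h : PdLE (sqIdeal K Q) d)
    (hQ : ∀ u, Q u ↔ Q' u) (hde : d ≤ e) : PdLE (sqIdeal K Q') e := by
  rw [← sqIdeal_congr hQ]
  exact h.mono hde

theorem PdLE.or_mem {Q : Set V → Prop} (hQ : Monotone Q) {v : V}
    (hv : ∀ u, Q (insert v u) → Q u) {d : ℕ} (h : PdLE (sqIdeal K Q) d) :
    PdLE (sqIdeal K fun u => Q u ∨ v ∈ u) (d + 1) := by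
  rw [← sqIdeal_sup_span]
  exact h.sup_span_singleton (isColonOf_sqIdeal_self hQ hv)

theorem PdLE.of_insert {Q : Set V → Prop} (hQ : Monotone Q) (v : V) {d : ℕ}
    (h₁ : PdLE (sqIdeal K fun u => Q (insert v u)) d)
    (h₂ : PdLE (sqIdeal K fun u => Q u ∨ v ∈ u) d) : PdLE (sqIdeal K Q) d :=
  .of_colon (isColonOf_sqIdeal hQ v) h₁ (by rwa [sqIdeal_sup_span])

theorem PdLE.or_varQ {Q : Set V → Prop} (hQ : Monotone Q) {d : ℕ} (h : PdLE (sqIdeal K Q) d) :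
    ∀ ws : List V, ws.Nodup → (∀ v ∈ ws, ∀ u, Q (insert v u) → Q u) →
      PdLE (sqIdeal K fun u => Q u ∨ VarQ ws u) (d + ws.length)
  | [], _, _ => h.congr (by simp) (by simp)
  | v :: ws, hn, hv => by
    rw [List.nodup_cons] at hn
    refine ((h.or_varQ hQ ws hn.2 fun w hw => hv w (by simp [hw])).or_mem
      (hQ.or (monotone_varQ ws)) (v := v) fun u => ?_).congr (fun u => ?_) (by simp [add_assoc])
    · rw [varQ_insert hn.1]
      exact Or.imp_left (hv v (by simp) u)
    · rw [varQ_cons]; tauto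

theorem PdLE.or_pathQ {Q : Set V → Prop} (hQ : Monotone Q) {d : ℕ} (h : PdLE (sqIdeal K Q) d) :
    ∀ l : List V, l.Nodup → (∀ v ∈ l, ∀ u, Q (insert v u) → Q u) →
      PdLE (sqIdeal K fun u => Q u ∨ PathQ l u) (d + 2 * l.length / 3)
  | [], _, _ => h.congr (by simp) (by simp)
  | [_], _, _ => h.congr (by simp) (by simp)
  | [a, b], hn, hv => by
    have hab : a ≠ b := by simpa using hn
    refine PdLE.of_insert (hQ.or (monotone_pathQ _)) b ?_ ?_
    · refine (h.or_mem hQ (hv a (by simp))).congr (fun u => ?_) (by simp)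
      simp [hab, show Q (insert b u) ↔ Q u from
        ⟨hv b (by simp) u, fun hu => hQ (Set.subset_insert b u) hu⟩]
    · refine (h.or_mem hQ (hv b (by simp))).congr (fun u => ?_) (by simp)
      simp
      tauto
  | a :: b :: c :: l, hn, hv => by
    simp only [List.nodup_cons, List.mem_cons, not_or] at hn
    obtain ⟨⟨hab, hac, hal⟩, ⟨hbc, hbl⟩, hcl, hl⟩ := hn
    have hb : ∀ u, Q (insert b u) ↔ Q u := fun u =>
      ⟨hv b (by simp) u, fun hu => hQ (Set.subset_insert b u) hu⟩
    refine PdLE.of_insert (hQ.or (monotone_pathQ _)) b ?_ ?_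
    · have hQa := hQ.or (monotone_mem a)
      have hc : PdLE (sqIdeal K fun u => (Q u ∨ a ∈ u) ∨ c ∈ u) (d + 1 + 1) := by
        refine (h.or_mem hQ (hv a (by simp))).or_mem hQa fun u => ?_
        rw [mem_insert_iff_of_ne hac]
        exact Or.imp_left (hv c (by simp) u)
      refine (hc.or_pathQ (hQa.or (monotone_mem c)) l hl fun v hvl u => ?_).congr
        (fun u => ?_) (by simp; lia)
      · rw [mem_insert_iff_of_ne (by rintro rfl; exact hal hvl),
          mem_insert_iff_of_ne (by rintro rfl; exact hcl hvl)]
        exact Or.imp_left (Or.imp_left (hv v (by simp [hvl]) u))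
      · have h1 := mem_or_pathQ_cons c l u
        have h2 : PathQ (c :: l) (insert b u) ↔ PathQ (c :: l) u :=
          pathQ_insert (by simp [hbc, hbl]) u
        rw [pathQ_cons_cons, pathQ_cons_cons, hb, h2, mem_insert_iff_of_ne hab,
          mem_insert_iff_of_ne (Ne.symm hbc), iff_true_intro (Set.mem_insert b u), and_true,
          true_and, h1, or_assoc, or_assoc]
    · refine ((h.or_mem hQ (hv b (by simp))).or_pathQ (hQ.or (monotone_mem b)) (c :: l)
        (by simp [hcl, hl]) fun v hvl u => ?_).congr (fun u => ?_) (by simp; lia)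
      · rw [mem_insert_iff_of_ne (by rintro rfl; simp at hvl; tauto)]
        exact Or.imp_left (hv v (by simp at hvl ⊢; tauto) u)
      · have h1 := mem_or_pathQ_cons b (c :: l) u
        rw [pathQ_cons_cons]
        tauto

theorem pdLE_varQ {ws : List V} (hn : ws.Nodup) :
    PdLE (sqIdeal K (VarQ ws)) ws.length := by
  have h0 : PdLE (sqIdeal K fun _ : Set V => False) 0 := by
    rw [sqIdeal_false]; exact pdLE_bot
  exact (h0.or_varQ monotone_const ws hn fun _ _ _ h => h).congr (by simp) (by simp)

theorem pdLE_varQ_pathQ {ws l : List V} (hn : (ws ++ l).Nodup) :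
    PdLE (sqIdeal K fun u => VarQ ws u ∨ PathQ l u) (ws.length + 2 * l.length / 3) := by
  rw [List.nodup_append'] at hn
  refine (pdLE_varQ hn.1).or_pathQ (monotone_varQ ws) l hn.2.1 fun v hv u => ?_
  rw [varQ_insert fun h => hn.2.2 h hv]
  exact id

theorem pdLE_varQ_pathQ_pathQ {ws l l' : List V} (hn : (ws ++ l ++ l').Nodup) :
    PdLE (sqIdeal K fun u => (VarQ ws u ∨ PathQ l u) ∨ PathQ l' u)
      (ws.length + 2 * l.length / 3 + 2 * l'.length / 3) := by
  rw [List.nodup_append'] at hn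
  refine (pdLE_varQ_pathQ hn.1).or_pathQ ((monotone_varQ ws).or (monotone_pathQ l)) l' hn.2.1
    fun v hv u => ?_
  have h : v ∉ ws ++ l := fun h => hn.2.2 h hv
  rw [List.mem_append, not_or] at h
  rw [varQ_insert h.1, pathQ_insert h.2]
  exact id

/-- Two cycles sharing the vertex `c`. -/
theorem pdLE_cycQ_cycQ {c : V} {xs ys : List V} (hn : (c :: xs ++ ys).Nodup)
    (hx : 2 ≤ xs.length) (hy : 2 ≤ ys.length) {p : ℕ}
    (h₁ : 2 * (xs.length + 1) / 3 + 2 * (ys.length + 1) / 3 ≤ p)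
    (h₂ : 1 + 2 * xs.length / 3 + 2 * ys.length / 3 ≤ p) :
    PdLE (sqIdeal K fun u => CycQ c xs u ∨ CycQ c ys u) p := by
  refine PdLE.of_insert ((monotone_cycQ c xs).or (monotone_cycQ c ys)) c ?_ ?_
  · have split : ∀ l : List V, 2 ≤ l.length → ∃ a w z, l = a :: (w ++ [z]) := by
      intro l hl
      match l with
      | a :: b :: l =>
        obtain h | ⟨w, z, h⟩ := List.eq_nil_or_concat (b :: l)
        · simp at h
        · exact ⟨a, w, z, by rw [h, List.concat_eq_append]⟩
    obtain ⟨a, w, z, rfl⟩ := split xs hx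
    obtain ⟨a', w', z', rfl⟩ := split ys hy
    have hn' : ([a, z, a', z'] ++ w ++ w').Nodup := by
      simp at hn ⊢; grind
    refine (pdLE_varQ_pathQ_pathQ hn').congr (fun u => ?_) (by simp at *; lia)
    rw [cycQ_insert (by simp at hn ⊢; grind), cycQ_insert (by simp at hn ⊢; grind)]
    simp
    tauto
  · refine (pdLE_varQ_pathQ_pathQ (ws := [c]) hn).congr (fun u => ?_) (by simpa using h₂)
    have h1 := mem_or_cycQ c xs u
    have h2 := mem_or_cycQ c ys u
    simp
    tauto

end PathPd

section PathAra

variable {K : Type} [Field K] {V : Type}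

section Prime

variable {R : Type} [CommRing R] {P : Ideal R} [hP : P.IsPrime]

theorem Ideal.IsPrime.mem_left_of_mul_add {x y z w : R} (h : y * z ∈ P)
    (h' : x * y + z * w ∈ P) : x * y ∈ P := by
  have h1 : (x * y) * (x * y) ∈ P := by
    have : (x * y) * (x * y) = x * y * (x * y + z * w) - x * w * (y * z) := by ring
    rw [this]
    exact sub_mem (P.mul_mem_left _ h') (P.mul_mem_left _ h)
  exact (hP.mem_or_mem h1).elim id id

theorem Ideal.IsPrime.mem_right_of_mul_add {x y z w : R} (h : y * z ∈ P)
    (h' : x * y + z * w ∈ P) : z * w ∈ P :=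
  (Submodule.add_mem_iff_right P (hP.mem_left_of_mul_add h h')).1 h'

theorem Ideal.IsPrime.mul_mem_iff_not {x y : R} : x * y ∈ P ↔ ¬ (x ∉ P ∧ y ∉ P) := by
  rw [hP.mul_mem_iff_mem_or_mem]; tauto

end Prime

theorem X_mul_X_mem_iff {P : Ideal (MvPolynomial V K)} (hP : P.IsPrime) (a b : V) :
    X a * X b ∈ P ↔ ¬ (a ∈ {v | (X v : MvPolynomial V K) ∉ P} ∧
      b ∈ {v | (X v : MvPolynomial V K) ∉ P}) :=
  hP.mul_mem_iff_not

/-- At most `s` elements generate the squarefree monomial ideal of `Q`, up to radical and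
modulo `g`. -/
def AraWith (K : Type) [Field K] {V : Type} (Q : Set V → Prop) (g : MvPolynomial V K) (s : ℕ) :
    Prop :=
  ∃ F : List (MvPolynomial V K), F.length ≤ s ∧ (∀ f ∈ F, f ∈ sqIdeal K Q) ∧
    ∀ P : Ideal (MvPolynomial V K), P.IsPrime → g ∈ P → (∀ f ∈ F, f ∈ P) → ¬ Q {v | X v ∉ P}

theorem AraWith.araLE [Finite V] {Q : Set V → Prop} (hQ : Monotone Q) {s : ℕ}
    (h : AraWith K Q 0 s) : AraLE (sqIdeal K Q) s := by
  obtain ⟨F, hF, hmem, hP⟩ := h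
  exact araLE_sqIdeal hQ F hF hmem fun P hp => hP P hp (zero_mem P)

theorem AraWith.congr {Q Q' : Set V → Prop} {g : MvPolynomial V K} {s t : ℕ}
    (h : AraWith K Q g s) (hQ : ∀ u, Q u ↔ Q' u) (hst : s ≤ t) : AraWith K Q' g t := by
  obtain rfl : Q = Q' := funext fun u => propext (hQ u)
  obtain ⟨F, hF, h⟩ := h
  exact ⟨F, hF.trans hst, h⟩

theorem AraWith.of_zero {Q : Set V → Prop} {s : ℕ} (h : AraWith K Q 0 s)
    (g : MvPolynomial V K) : AraWith K Q g s := by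
  obtain ⟨F, hF, hmem, hP⟩ := h
  exact ⟨F, hF, hmem, fun P hp _ => hP P hp (zero_mem P)⟩

theorem AraWith.or {Q Q' : Set V → Prop} {g : MvPolynomial V K} {s t : ℕ}
    (h : AraWith K Q g s) (h' : AraWith K Q' g t) :
    AraWith K (fun u => Q u ∨ Q' u) g (s + t) := by
  obtain ⟨F, hF, hmem, hP⟩ := h
  obtain ⟨F', hF', hmem', hP'⟩ := h'
  refine ⟨F ++ F', by simp; lia, fun f hf => ?_, fun P hp hg hf => ?_⟩
  · rw [← sqIdeal_sup]
    rcases List.mem_append.1 hf with hf | hf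
    · exact Ideal.mem_sup_left (hmem f hf)
    · exact Ideal.mem_sup_right (hmem' f hf)
  · rintro (h | h)
    · exact hP P hp hg (fun f hf' => hf f (by simp [hf'])) h
    · exact hP' P hp hg (fun f hf' => hf f (by simp [hf'])) h

theorem araWith_edge_self (a b : V) :
    AraWith K (fun u => a ∈ u ∧ b ∈ u) (X a * X b) 0 :=
  ⟨[], le_rfl, by simp, fun P hP h _ => (X_mul_X_mem_iff hP a b).1 h⟩

theorem AraWith.of_edge {Q : Set V → Prop} {a b : V} (hQ : Q {a, b}) {s : ℕ}
    (h : AraWith K Q (X a * X b) s) : AraWith K Q 0 (s + 1) := by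
  obtain ⟨F, hF, hmem, hP⟩ := h
  refine ⟨(X a * X b) :: F, by simpa using hF, by simpa [X_mul_X_mem_sqIdeal hQ] using hmem,
    fun P hp _ h => hP P hp (h _ (by simp)) fun f hf => h f (by simp [hf])⟩

theorem araWith_varQ (g : MvPolynomial V K) (ws : List V) : AraWith K (VarQ ws) g ws.length := by
  refine ⟨ws.map X, by simp, ?_, fun P _ _ h => ?_⟩
  · simp only [List.mem_map, forall_exists_index, and_imp, forall_apply_eq_imp_iff₂]
    exact fun v hv => X_mem_sqIdeal ⟨v, hv, rfl⟩
  · rintro ⟨v, hv, hv'⟩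
    exact hv' (h _ (List.mem_map_of_mem hv))

theorem araWith_edge (a b : V) : AraWith K (fun u => a ∈ u ∧ b ∈ u) 0 1 :=
  (araWith_edge_self a b).of_edge (by simp)

theorem araWith_pathQ_four_mid (a b c d : V) :
    AraWith K (PathQ [a, b, c, d]) (X b * X c) 1 := by
  refine ⟨[X a * X b + X c * X d], le_rfl, ?_, ?_⟩
  · simp only [List.mem_singleton, forall_eq]
    exact add_mem (X_mul_X_mem_sqIdeal (by simp)) (X_mul_X_mem_sqIdeal (by simp))
  · intro P hP hg h
    simp only [List.mem_singleton, forall_eq] at h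
    have h1 := (X_mul_X_mem_iff hP _ _).1 (hP.mem_left_of_mul_add hg h)
    have h2 := (X_mul_X_mem_iff hP _ _).1 (hP.mem_right_of_mul_add hg h)
    have h3 := (X_mul_X_mem_iff hP _ _).1 hg
    rw [pathQ_cons_cons, pathQ_cons_cons, pathQ_cons_cons, pathQ_singleton]
    tauto

theorem araWith_pathQ_four (a b c d : V) : AraWith K (PathQ [a, b, c, d]) 0 2 :=
  (araWith_pathQ_four_mid a b c d).of_edge (by simp)

theorem araWith_pathQ : ∀ l : List V, AraWith K (PathQ l) 0 (2 * l.length / 3)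
  | [] => (araWith_varQ 0 []).congr (by simp) (by simp)
  | [a] => (araWith_varQ 0 []).congr (by simp) (by simp)
  | [a, b] => (araWith_edge a b).congr (by simp) (by simp)
  | [a, b, c] => ((araWith_edge a b).or (araWith_edge b c)).congr (by simp) (by simp)
  | a :: b :: c :: d :: l => ((araWith_pathQ_four a b c d).or (araWith_pathQ (d :: l))).congr
      (by simp [or_assoc]) (by simp; lia)

/-- Generators used for cycles of length `2` modulo `3`. -/
noncomputable def cycleForms (K : Type) [Field K] {V : Type} (p q : MvPolynomial V K) :
    List V → List (MvPolynomial V K)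
  | a :: b :: c :: d :: l =>
    [X a * X b - X c * X d, X b * X c - (p + q)] ++ cycleForms K p q (d :: l)
  | [a, b, c] => [X a * X b - p, X b * X c - q]
  | _ => []

theorem length_cycleForms_le (p q : MvPolynomial V K) :
    ∀ l : List V, (cycleForms K p q l).length ≤ 2 * l.length / 3
  | a :: b :: c :: d :: l => by
    have := length_cycleForms_le p q (d :: l)
    simp [cycleForms] at this ⊢
    lia
  | [a, b, c] => by simp [cycleForms]
  | [] => by simp [cycleForms]
  | [_] => by simp [cycleForms]
  | [_, _] => by simp [cycleForms]

theorem mem_of_mem_cycleForms {p q : MvPolynomial V K} {I : Ideal (MvPolynomial V K)}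
    (hp : p ∈ I) (hq : q ∈ I) : ∀ l : List V, sqIdeal K (PathQ l) ≤ I →
      ∀ f ∈ cycleForms K p q l, f ∈ I
  | a :: b :: c :: d :: l, hl, f, hf => by
    simp only [cycleForms, List.cons_append, List.nil_append, List.mem_cons] at hf
    rcases hf with rfl | rfl | hf
    · exact sub_mem (hl (X_mul_X_mem_sqIdeal (by simp))) (hl (X_mul_X_mem_sqIdeal (by simp)))
    · exact sub_mem (hl (X_mul_X_mem_sqIdeal (by simp))) (add_mem hp hq)
    · exact mem_of_mem_cycleForms hp hq (d :: l)
        ((sqIdeal_mono (by simp; tauto)).trans hl) f hf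
  | [a, b, c], hl, f, hf => by
    simp only [cycleForms, List.mem_cons, List.not_mem_nil, or_false] at hf
    rcases hf with rfl | rfl
    · exact sub_mem (hl (X_mul_X_mem_sqIdeal (by simp))) hp
    · exact sub_mem (hl (X_mul_X_mem_sqIdeal (by simp))) hq
  | [], _, f, hf => by simp [cycleForms] at hf
  | [_], _, f, hf => by simp [cycleForms] at hf
  | [_, _], _, f, hf => by simp [cycleForms] at hf

theorem List.induction_three {α : Type} {motive : List α → Prop}
    (base : ∀ a b c, motive [a, b, c])
    (step : ∀ a b c d l, motive (d :: l) → motive (a :: b :: c :: d :: l)) :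
    ∀ l : List α, l ≠ [] → 3 ∣ l.length → motive l
  | a :: b :: c :: d :: l, _, h => step a b c d l
      (induction_three base step (d :: l) (by simp) (by simp at h ⊢; lia))
  | [a, b, c], _, _ => base a b c
  | [], h, _ => (h rfl).elim
  | [_], _, h => by simp at h
  | [_, _], _, h => by simp at h

section

variable {p q : MvPolynomial V K} {P : Ideal (MvPolynomial V K)}

theorem not_pathQ_of_cycleForms (hP : P.IsPrime) (hp : p ∈ P) (hq : q ∈ P) (l : List V)
    (hl : l ≠ []) (h3 : 3 ∣ l.length) :
    (∀ f ∈ cycleForms K p q l, f ∈ P) → ¬ PathQ l {v | X v ∉ P} := by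
  refine l.induction_three
    (motive := fun l => (∀ f ∈ cycleForms K p q l, f ∈ P) → ¬ PathQ l {v | X v ∉ P})
    (fun a b c h => ?_) (fun a b c d l ih h => ?_) hl h3
  · simp only [cycleForms, List.mem_cons, List.not_mem_nil, or_false, forall_eq_or_imp,
      forall_eq] at h
    have h1 := (X_mul_X_mem_iff hP _ _).1 ((Submodule.sub_mem_iff_left P hp).1 h.1)
    have h2 := (X_mul_X_mem_iff hP _ _).1 ((Submodule.sub_mem_iff_left P hq).1 h.2)
    simp only [pathQ_cons_cons, pathQ_singleton]
    tauto
  · simp only [cycleForms, List.cons_append, List.nil_append, List.mem_cons,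
      forall_eq_or_imp] at h
    have hbc := (Submodule.sub_mem_iff_left P (add_mem hp hq)).1 h.2.1
    have hab : X a * X b ∈ P := by
      have e : (X a * X b : MvPolynomial V K) * (X a * X b) =
          X a * X b * (X a * X b - X c * X d) + X a * X d * (X b * X c) := by ring
      have := add_mem (P.mul_mem_left (X a * X b) h.1) (P.mul_mem_left (X a * X d) hbc)
      rw [← e] at this
      exact (hP.mem_or_mem this).elim id id
    have h1 := (X_mul_X_mem_iff hP _ _).1 hab
    have h2 := (X_mul_X_mem_iff hP _ _).1 hbc
    have h4 := (X_mul_X_mem_iff hP _ _).1 ((Submodule.sub_mem_iff_right P hab).1 h.1)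
    have h5 := ih h.2.2
    simp only [pathQ_cons_cons]
    tauto

theorem mem_of_getLast_cycleForms (l : List V) (hl : l ≠ []) (h3 : 3 ∣ l.length) :
    (∀ f ∈ cycleForms K p q l, f ∈ P) → ∀ c ∈ l.getLast?, X c ∈ P → q ∈ P := by
  refine l.induction_three
    (motive := fun l => (∀ f ∈ cycleForms K p q l, f ∈ P) →
      ∀ c ∈ l.getLast?, X c ∈ P → q ∈ P)
    (fun a b c h => ?_) (fun a b c d l ih h => ?_) hl h3
  · simp only [cycleForms, List.mem_cons, List.not_mem_nil, or_false, forall_eq_or_imp,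
      forall_eq] at h
    simp only [List.getLast?_cons_cons, List.getLast?_singleton, Option.mem_def, Option.some.injEq,
      forall_eq']
    exact fun hc => (Submodule.sub_mem_iff_right P (P.mul_mem_left _ hc)).1 h.2
  · simp only [cycleForms, List.cons_append, List.nil_append, List.mem_cons,
      forall_eq_or_imp] at h
    simpa only [List.getLast?_cons_cons] using ih h.2.2

theorem mem_head_of_cycleForms (hP : P.IsPrime) (hp : p ∈ P) (hq : q ∉ P) (l : List V)
    (hl : l ≠ []) (h3 : 3 ∣ l.length) :
    (∀ f ∈ cycleForms K p q l, f ∈ P) → ∀ a ∈ l.head?, X a ∈ P := by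
  refine l.induction_three
    (motive := fun l => (∀ f ∈ cycleForms K p q l, f ∈ P) →
      ∀ a ∈ l.head?, X a ∈ P)
    (fun a b c h => ?_) (fun a b c d l ih h => ?_) hl h3
  · simp only [cycleForms, List.mem_cons, List.not_mem_nil, or_false, forall_eq_or_imp,
      forall_eq] at h
    simp only [List.head?_cons, Option.mem_def, Option.some.injEq, forall_eq']
    have h1 := hP.mem_or_mem ((Submodule.sub_mem_iff_left P hp).1 h.1)
    refine h1.resolve_right fun hb => hq ?_
    exact (Submodule.sub_mem_iff_right P (P.mul_mem_right _ hb)).1 h.2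
  · simp only [cycleForms, List.cons_append, List.nil_append, List.mem_cons,
      forall_eq_or_imp] at h
    simp only [List.head?_cons, Option.mem_def, Option.some.injEq, forall_eq'] at ih ⊢
    have hd := ih h.2.2
    have hab := (Submodule.sub_mem_iff_left P (P.mul_mem_left _ hd)).1 h.1
    refine (hP.mem_or_mem hab).resolve_right fun hb => hq ?_
    exact (Submodule.add_mem_iff_right P hp).1
      ((Submodule.sub_mem_iff_right P (P.mul_mem_right _ hb)).1 h.2.1)

theorem notMem_head_of_cycleForms (hP : P.IsPrime) (hp : p ∉ P) (hq : q ∈ P) (l : List V)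
    (hl : l ≠ []) (h3 : 3 ∣ l.length) :
    (∀ f ∈ cycleForms K p q l, f ∈ P) → ∀ a ∈ l.head?, X a ∉ P := by
  refine l.induction_three
    (motive := fun l => (∀ f ∈ cycleForms K p q l, f ∈ P) →
      ∀ a ∈ l.head?, X a ∉ P)
    (fun a b c h => ?_) (fun a b c d l ih h => ?_) hl h3
  · simp only [cycleForms, List.mem_cons, List.not_mem_nil, or_false, forall_eq_or_imp,
      forall_eq] at h
    simp only [List.head?_cons, Option.mem_def, Option.some.injEq, forall_eq']
    exact fun ha => hp ((Submodule.sub_mem_iff_right P (P.mul_mem_right _ ha)).1 h.1)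
  · simp only [cycleForms, List.cons_append, List.nil_append, List.mem_cons,
      forall_eq_or_imp] at h
    simp only [List.head?_cons, Option.mem_def, Option.some.injEq, forall_eq'] at ih ⊢
    have hd := ih h.2.2
    intro ha
    have hcd := (Submodule.sub_mem_iff_right P (P.mul_mem_right _ ha)).1 h.1
    have hc := (hP.mem_or_mem hcd).resolve_right hd
    exact hp ((Submodule.add_mem_iff_left P hq).1
      ((Submodule.sub_mem_iff_right P (P.mul_mem_left _ hc)).1 h.2.1))

end

theorem List.exists_eq_concat {α : Type} {l : List α} (hl : l ≠ []) : ∃ t z, l = t ++ [z] := by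
  obtain h | ⟨t, z, h⟩ := l.eq_nil_or_concat
  · exact (hl h).elim
  · exact ⟨t, z, by rw [h, List.concat_eq_append]⟩

/-- The edge ideal of a cycle, with one of the edges at `c` given as a separate generator. -/
theorem araWith_cycQ (c y : V) (l : List V) (hl : l ≠ []) {s : ℕ}
    (hs : 2 * (l.length + 2) / 3 ≤ s + 1)
    (hs' : (l.length + 2) % 3 = 1 → 2 * (l.length + 2) / 3 ≤ s) :
    AraWith K (CycQ c (y :: l)) (X c * X y) s := by
  have hcyc : ∀ u, CycQ c (y :: l) u ↔ PathQ (y :: (l ++ [c])) u ∨ (c ∈ u ∧ y ∈ u) := by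
    intro u
    rw [CycQ, List.cons_append, List.cons_append, pathQ_cons_cons, or_comm]
  obtain h | h | h : l.length % 3 = 0 ∨ l.length % 3 = 1 ∨ l.length % 3 = 2 := by lia
  · obtain ⟨b, l, rfl⟩ : ∃ b t, l = b :: t := List.exists_cons_of_ne_nil hl
    set L := l ++ [c] with hL
    have hL0 : L ≠ [] := by simp [L]
    have hL3 : 3 ∣ L.length := by simp [L] at h ⊢; lia
    obtain ⟨a, t, hat⟩ := List.exists_cons_of_ne_nil hL0
    refine ⟨cycleForms K (X y * X b) (X b * X a) L, ?_, ?_, ?_⟩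
    · refine (length_cycleForms_le _ _ _).trans ?_
      simp [L] at hs h ⊢
      lia
    · refine mem_of_mem_cycleForms ?_ ?_ _ (sqIdeal_mono fun u hu => ?_)
      · exact X_mul_X_mem_sqIdeal ((hcyc _).2 (by simp))
      · refine X_mul_X_mem_sqIdeal ((hcyc _).2 ?_)
        rw [List.cons_append, ← hL, hat]; simp
      · rw [hcyc, List.cons_append, ← hL, hat, pathQ_cons_cons, pathQ_cons_cons, ← hat]
        exact Or.inl (Or.inr (Or.inr hu))
    · intro P hP hg hF
      have hc : X c ∈ P → X b * X a ∈ P :=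
        mem_of_getLast_cycleForms L hL0 hL3 hF c (by simp [L])
      have hcy := (X_mul_X_mem_iff hP _ _).1 hg
      have hpq : X y * X b ∈ P ∨ X b * X a ∈ P :=
        (hP.mem_or_mem hg).elim (fun h => Or.inr (hc h)) fun h => Or.inl (P.mul_mem_right _ h)
      have hp : X y * X b ∈ P := by
        by_contra hp
        have hq := hpq.resolve_left hp
        have ha := notMem_head_of_cycleForms hP hp hq L hL0 hL3 hF a (by simp [hat])
        exact hp (P.mul_mem_left _ ((hP.mem_or_mem hq).resolve_right ha))
      have hq : X b * X a ∈ P := by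
        by_contra hq
        have ha := mem_head_of_cycleForms hP hp hq L hL0 hL3 hF a (by simp [hat])
        exact hq (P.mul_mem_left _ ha)
      have h1 := not_pathQ_of_cycleForms hP hp hq L hL0 hL3 hF
      rw [X_mul_X_mem_iff hP] at hp hq
      rw [hcyc, List.cons_append, ← hL, pathQ_cons_cons]
      rw [hat] at h1 ⊢
      rw [pathQ_cons_cons]
      clear * - h1 hp hq hcy
      tauto
  · obtain ⟨t, z, rfl⟩ : ∃ t z, l = t ++ [z] := List.exists_eq_concat hl
    obtain ⟨b, r, hb⟩ := List.exists_cons_of_ne_nil hl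
    refine ((araWith_pathQ_four_mid z c y b).or
      ((araWith_pathQ (t ++ [z])).of_zero _)).congr (fun u => ?_) (by simp at hs h ⊢; lia)
    have := pathQ_append_pair t z c u
    rw [hcyc, List.append_assoc, List.singleton_append]
    rw [hb] at this ⊢
    obtain ⟨r', hr'⟩ : ∃ r', t ++ [z, c] = b :: r' := by
      refine ⟨r ++ [c], ?_⟩
      rw [← List.cons_append, ← hb]; simp
    rw [hr'] at this ⊢
    simp only [pathQ_cons_cons, pathQ_singleton]
    rw [this]
    clear * -
    tauto
  · refine (((araWith_pathQ (y :: (l ++ [c]))).of_zero _).or (araWith_edge_self c y)).congr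
      (fun u => (hcyc u).symm) ?_
    simp at hs' ⊢
    lia

theorem araWith_cycQ_cycQ_of_one_mod_three (c : V) {xs ys : List V} (hx : 2 ≤ xs.length)
    (hy : 2 ≤ ys.length) (hx3 : (xs.length + 1) % 3 = 1) {s : ℕ}
    (hs : 2 * (ys.length + 1) / 3 ≤ s + 1)
    (hs' : (ys.length + 1) % 3 = 1 → 2 * (ys.length + 1) / 3 ≤ s) :
    AraWith K (fun u => CycQ c xs u ∨ CycQ c ys u) 0 (2 * (xs.length + 1) / 3 + s + 1) := by
  obtain ⟨a, w, rfl⟩ := List.exists_cons_of_ne_nil (l := xs) (by rintro rfl; simp at hx)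
  obtain ⟨w, z, rfl⟩ := List.exists_eq_concat (l := w) (by rintro rfl; simp at hx)
  have hw : w ≠ [] := by rintro rfl; simp at hx3
  obtain ⟨y, l, rfl⟩ := List.exists_cons_of_ne_nil (l := ys) (by rintro rfl; simp at hy)
  obtain ⟨b, r, hb⟩ := List.exists_cons_of_ne_nil hw
  obtain ⟨t, e, he⟩ := List.exists_eq_concat hw
  have hX : ∀ u, CycQ c (a :: (w ++ [z])) u ↔
      PathQ [a, c, z, e] u ∨ PathQ w u ∨ (b ∈ u ∧ a ∈ u) := by
    intro u
    rw [cycQ_cons_concat]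
    have h1 : PathQ (w ++ [z]) u ↔ PathQ w u ∨ (e ∈ u ∧ z ∈ u) := by
      rw [he, List.append_assoc, List.singleton_append, pathQ_append_pair]
    have h2 : PathQ (a :: (w ++ [z])) u ↔ (a ∈ u ∧ b ∈ u) ∨ PathQ (w ++ [z]) u := by
      rw [hb, List.cons_append, pathQ_cons_cons]
    rw [h2, h1, pathQ_cons_cons, pathQ_cons_cons, pathQ_cons_cons, pathQ_singleton, or_false,
      and_comm (a := c ∈ u), and_comm (a := z ∈ u), and_comm (a := z ∈ u), and_comm (a := b ∈ u)]
    grind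
  obtain ⟨F₁, hF₁, hm₁, hP₁⟩ := araWith_pathQ_four (K := K) a c z e
  obtain ⟨F₂, hF₂, hm₂, hP₂⟩ := araWith_pathQ (K := K) w
  obtain ⟨F₃, hF₃, hm₃, hP₃⟩ := araWith_cycQ (K := K) c y l (by rintro rfl; simp at hy) hs hs'
  refine ⟨F₁ ++ F₂ ++ [X b * X a + X c * X y] ++ F₃, ?_, ?_, ?_⟩
  · simp at hF₂ hx3 ⊢
    lia
  · intro f hf
    simp only [List.mem_append, List.mem_singleton] at hf
    rcases hf with ((hf | hf) | rfl) | hf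
    · exact sqIdeal_mono (fun u hu => Or.inl ((hX u).2 (Or.inl hu))) (hm₁ f hf)
    · exact sqIdeal_mono (fun u hu => Or.inl ((hX u).2 (Or.inr (Or.inl hu)))) (hm₂ f hf)
    · refine add_mem (X_mul_X_mem_sqIdeal (Or.inl ((hX _).2 (by simp))))
        (X_mul_X_mem_sqIdeal (Or.inr ?_))
      rw [CycQ, List.cons_append, List.cons_append, pathQ_cons_cons]
      simp
    · exact sqIdeal_mono (fun u hu => Or.inr hu) (hm₃ f hf)
  · intro P hP _ hF
    simp only [List.mem_append, List.mem_singleton] at hF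
    have h1 := hP₁ P hP (zero_mem P) fun f hf => hF f (by simp [hf])
    have h2 := hP₂ P hP (zero_mem P) fun f hf => hF f (by simp [hf])
    have hac : X a * X c ∈ P := by
      rw [X_mul_X_mem_iff hP]
      exact fun h => h1 (by simp only [pathQ_cons_cons]; exact Or.inl h)
    have hf := hF (X b * X a + X c * X y) (by simp)
    have hba := (X_mul_X_mem_iff hP _ _).1 (hP.mem_left_of_mul_add hac hf)
    have h3 := hP₃ P hP (hP.mem_right_of_mul_add hac hf) fun f hf => hF f (by simp [hf])
    exact not_or.2 ⟨fun h => ((hX _).1 h).elim h1 fun h => h.elim h2 hba, h3⟩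

theorem araWith_cycQ_cycQ (c : V) {xs ys : List V} (hx : 2 ≤ xs.length)
    (hy : 2 ≤ ys.length) {p : ℕ}
    (hp : 2 * (xs.length + 1) / 3 + 2 * (ys.length + 1) / 3 ≤ p)
    (hp' : (xs.length + 1) % 3 = 1 → (ys.length + 1) % 3 = 1 →
      2 * (xs.length + 1) / 3 + 2 * (ys.length + 1) / 3 + 1 ≤ p) :
    AraWith K (fun u => CycQ c xs u ∨ CycQ c ys u) 0 p := by
  by_cases h : (xs.length + 1) % 3 = 1
  · refine (araWith_cycQ_cycQ_of_one_mod_three c hx hy h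
      (s := p - 2 * (xs.length + 1) / 3 - 1) ?_ ?_).congr (fun _ => Iff.rfl) ?_ <;> lia
  by_cases h' : (ys.length + 1) % 3 = 1
  · refine (araWith_cycQ_cycQ_of_one_mod_three c hy hx h'
      (s := p - 2 * (ys.length + 1) / 3 - 1) ?_ ?_).congr (fun _ => or_comm) ?_ <;> lia
  have key : ∀ l : List V, 2 ≤ l.length → (l.length + 1) % 3 ≠ 1 →
      AraWith K (CycQ c l) 0 (2 * (l.length + 1) / 3) := by
    intro l hl h3
    match l with
    | y :: l =>
      simp only [List.length_cons] at hl h3 ⊢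
      refine ((araWith_cycQ c y l (by rintro rfl; simp at hl)
        (s := 2 * (l.length + 2) / 3 - 1) (by lia) (by lia)).of_edge ?_).congr
          (fun _ => Iff.rfl) (by lia)
      rw [CycQ, List.cons_append, List.cons_append, pathQ_cons_cons]
      simp
  exact ((key xs hx h).or (key ys hy h')).congr (fun _ => Iff.rfl) hp

end PathAra

section LowerBound

variable {V : Type}

/-- The larger of the two ideals whose intersection is the ideal of a cycle; it lives on the
cycle shortened by three vertices together with two pendant edges. -/
def PendantQ (ws : List V) (c y₁ y₂ y₃ : V) (l : List V) (u : Set V) : Prop :=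
  VarQ (y₂ :: ws) u ∨ (c ∈ u ∧ y₁ ∈ u) ∨ PathQ (y₃ :: (l ++ [c])) u ∨ PathQ (c :: (l ++ [c])) u

theorem monotone_pendantQ (ws : List V) (c y₁ y₂ y₃ : V) (l : List V) :
    Monotone (PendantQ ws c y₁ y₂ y₃ l) :=
  (monotone_varQ _).or (((monotone_mem _).and (monotone_mem _)).or
    ((monotone_pathQ _).or (monotone_pathQ _)))

theorem pendantQ_nil (ws : List V) (c y₁ y₂ y₃ : V) (u : Set V) :
    PendantQ ws c y₁ y₂ y₃ [] u ↔ VarQ (y₂ :: c :: ws) u := by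
  simp only [PendantQ, List.nil_append, pathQ_cons_cons, pathQ_singleton, varQ_cons]
  tauto

theorem pendantQ_cons (ws : List V) (c y₁ y₂ y₃ y₄ : V) (l : List V) (u : Set V) :
    PendantQ ws c y₁ y₂ y₃ (y₄ :: l) u ↔
      (VarQ (y₂ :: ws) u ∨ PathQ [y₁, c, y₄, y₃] u) ∨ PathQ (y₄ :: l ++ [c]) u := by
  simp only [PendantQ, List.cons_append, pathQ_cons_cons, pathQ_singleton, varQ_cons]
  grind

/-- A Mayer–Vietoris induction showing that a nonvanishing statement for ideals of variables
propagates to ideals of cycles. -/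
theorem not_vanish_cycQ {Van : (Set V → Prop) → ℕ → Prop} {D : List V}
    (hMV : ∀ (A B : Set V → Prop) (i : ℕ), Monotone A → Monotone B → 0 < i →
      Van (fun u => A u ∧ B u) i → Van A (i + 1) → Van B (i + 1) →
        Van (fun u => A u ∨ B u) (i + 1))
    (hA : ∀ ws l : List V, (ws ++ l).Nodup →
      Van (fun u => VarQ ws u ∨ PathQ l u) (ws.length + 2 * l.length / 3 + 2))
    (hB : ∀ (ws : List V) (c y₁ y₂ y₃ : V) (l : List V) (k : ℕ),
      (c :: y₁ :: y₂ :: y₃ :: l ++ ws).Nodup → l.length = 3 * k →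
        Van (PendantQ ws c y₁ y₂ y₃ l) (ws.length + 2 * k + 4))
    (hend : ∀ (v : V) (ws : List V), (v :: ws).Nodup → (∀ w ∈ v :: ws, w ∉ D) →
      ¬ Van (VarQ (v :: ws)) (ws.length + 1)) :
    ∀ (k : ℕ) (ws : List V) (c : V) (l : List V), (c :: l ++ ws).Nodup →
      (∀ w ∈ c :: l ++ ws, w ∉ D) → l.length = 3 * k →
      ¬ Van (fun u => VarQ ws u ∨ CycQ c l u) (ws.length + 2 * k + 1)
  | 0, ws, c, [], hn, hD, _, h => by
    refine hend c ws hn hD ?_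
    convert h using 1
    funext u
    simp [CycQ, or_comm]
  | k + 1, ws, c, y₁ :: y₂ :: y₃ :: l, hn, hD, hl, h => by
    have hp : (c :: l ++ (y₁ :: y₂ :: y₃ :: ws)).Perm (c :: y₁ :: y₂ :: y₃ :: l ++ ws) :=
      (List.perm_append_comm_assoc l [y₁, y₂, y₃] ws).cons c
    refine not_vanish_cycQ hMV hA hB hend k (y₁ :: y₂ :: y₃ :: ws) c l
      (hp.nodup_iff.2 hn) (fun w hw => hD w (hp.mem_iff.1 hw)) (by simp at hl; lia) ?_
    have hl' : l.length = 3 * k := by simp at hl; lia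
    obtain ⟨b, t, ht⟩ := List.exists_cons_of_ne_nil (l := l ++ [c]) (by simp)
    have hA' := hA (y₁ :: y₃ :: ws) (l ++ [c]) (by
      classical
      rw [List.nodup_iff_count_le_one] at hn ⊢
      intro v
      have := hn v
      simp only [List.count_append, List.count_cons, List.count_nil] at this ⊢
      lia)
    have key := hMV (fun u => VarQ (y₁ :: y₃ :: ws) u ∨ PathQ (l ++ [c]) u)
      (PendantQ ws c y₁ y₂ y₃ l) (ws.length + 2 * k + 3)
      ((monotone_varQ _).or (monotone_pathQ _)) (monotone_pendantQ _ _ _ _ _ _) (by lia)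
      ?_ ?_ (hB ws c y₁ y₂ y₃ l k hn hl')
    · convert key using 1
      · funext u
        simp only [CycQ, PendantQ, List.cons_append, ht, pathQ_cons_cons, varQ_cons]
        apply propext
        clear * -
        grind
      · simp; lia
    · convert h using 1
      · funext u
        simp only [CycQ, PendantQ, List.cons_append, ht, pathQ_cons_cons, varQ_cons]
        apply propext
        clear * -
        grind
      · lia
    · convert hA' using 1
      simp [hl']; lia
  | 0, _, _, _ :: _, _, _, hl, _ => by simp at hl
  | k + 1, _, _, [], _, _, hl, _ => by simp at hl
  | k + 1, _, _, [_], _, _, hl, _ => by simp at hl; lia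
  | k + 1, _, _, [_, _], _, _, hl, _ => by simp at hl; lia

theorem of_insert_list {P : (Set V → Prop) → Prop} :
    ∀ (D : List V) (Q : Set V → Prop), Monotone Q →
      (∀ v ∈ D, ∀ Q, Monotone Q → P Q → P fun u => Q (insert v u)) → P Q →
      P fun u => Q (u ∪ {v | v ∈ D})
  | [], Q, _, _, h => by simpa using h
  | v :: D, Q, hQ, hP, h => by
    have := of_insert_list D _ (monotone_insert hQ v) (fun w hw => hP w (by simp [hw]))
      (hP v (by simp) Q hQ h)
    convert this using 4 with u
    ext w
    simp
    tauto

/-- After inverting suitable vertices, the edge ideal of two cycles sharing a vertex becomes an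
ideal of variables plus the ideal of a cycle of length `1` modulo `3`. -/
theorem exists_reduction {c : V} {xs ys : List V} (hn : (c :: xs ++ ys).Nodup)
    (hx : 2 ≤ xs.length) (hy : 2 ≤ ys.length) :
    ∃ (D ws : List V) (c' : V) (l : List V) (k : ℕ), (c' :: l ++ ws).Nodup ∧
      (∀ w ∈ c' :: l ++ ws, w ∉ D) ∧ l.length = 3 * k ∧
      (∀ u, (CycQ c xs (u ∪ {v | v ∈ D}) ∨ CycQ c ys (u ∪ {v | v ∈ D})) ↔
        VarQ ws u ∨ CycQ c' l u) ∧
      ws.length + 2 * k + 1 = 2 * (xs.length + 1) / 3 + 2 * (ys.length + 1) / 3 +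
        if (xs.length + 1) % 3 = 1 ∧ (ys.length + 1) % 3 = 1 then 1 else 0 := by
  obtain ⟨a, w, rfl⟩ := List.exists_cons_of_ne_nil (l := xs) (by rintro rfl; simp at hx)
  obtain ⟨w, z, rfl⟩ := List.exists_eq_concat (l := w) (by rintro rfl; simp at hx)
  obtain ⟨a', w', rfl⟩ := List.exists_cons_of_ne_nil (l := ys) (by rintro rfl; simp at hy)
  obtain ⟨w', z', rfl⟩ := List.exists_eq_concat (l := w') (by rintro rfl; simp at hy)
  split_ifs with h3
  · obtain ⟨D, ws, hp, hQ, hlen, hend⟩ := exists_dominating (a :: (w ++ [z]))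
      (by simp at hn ⊢; grind)
    have hnD : (D ++ ws).Nodup := hp.nodup_iff.2 (by simp at hn ⊢; grind)
    have hsub : ∀ v, v ∈ D ++ ws ↔ v ∈ a :: (w ++ [z]) := fun v => hp.mem_iff
    have hd : ∀ v ∈ c :: (a' :: (w' ++ [z'])), v ∉ D ++ ws := by
      intro v hv
      rw [hsub]
      simp at hn hv ⊢; grind
    have ha : a ∈ ws := hend (by simp at h3 ⊢; lia) a (by simp)
    have hz : z ∈ ws := hend (by simp at h3 ⊢; lia) z (by simp [List.getLast?_cons])
    have hcD : ∀ v, v ∉ D → ∀ u : Set V, v ∈ u ∪ {v | v ∈ D} ↔ v ∈ u := by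
      intro v hv u; simp [hv]
    rw [List.nodup_append'] at hnD
    refine ⟨D, ws, c, a' :: (w' ++ [z']), (w'.length + 2) / 3, ?_, ?_, ?_, fun u => ?_, ?_⟩
    · rw [List.nodup_append']
      refine ⟨by simp at hn ⊢; grind, hnD.2.1, fun v hv hw => hd v hv (by simp [hw])⟩
    · intro v hv
      rcases List.mem_append.1 hv with hv | hv
      · exact fun h => hd v hv (by simp [h])
      · exact fun h => hnD.2.2 h hv
    · simp at h3 ⊢; lia
    · have h1 : CycQ c (a' :: (w' ++ [z'])) (u ∪ {v | v ∈ D}) ↔ CycQ c (a' :: (w' ++ [z'])) u := by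
        refine pathQ_congr fun v hv => hcD v (fun h => hd v ?_ (by simp [h])) u
        rcases List.mem_append.1 hv with hv | hv
        · exact hv
        · simp [List.mem_singleton.1 hv]
      have h2 : a ∈ u → VarQ ws u := fun h => ⟨a, ha, h⟩
      have h4 : z ∈ u → VarQ ws u := fun h => ⟨z, hz, h⟩
      rw [h1, cycQ_cons_concat, hQ, hcD a fun h => hnD.2.2 h ha, hcD z fun h => hnD.2.2 h hz]
      tauto
    · rw [hlen]
      simp at h3 ⊢; lia
  · obtain ⟨D, ws, hp, hQ, hlen, -⟩ := exists_dominating w (by simp at hn ⊢; grind)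
    obtain ⟨D', ws', hp', hQ', hlen', -⟩ := exists_dominating w' (by simp at hn ⊢; grind)
    have hperm : ((c :: (D ++ D')) ++ (a :: ([z, a', z'] ++ ws ++ ws'))).Perm
        (c :: (a :: (w ++ [z])) ++ (a' :: (w' ++ [z']))) := by
      classical
      rw [List.perm_iff_count] at hp hp' ⊢
      intro v
      have h₁ := hp v
      have h₂ := hp' v
      simp only [List.count_append, List.count_cons, List.count_nil] at h₁ h₂ ⊢
      lia
    have hc : c ∉ a :: (w ++ [z]) ∧ c ∉ a' :: (w' ++ [z']) := by
      rw [List.cons_append, List.nodup_cons, List.mem_append, not_or] at hn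
      exact hn.1
    have hnE := hperm.nodup_iff.2 hn
    rw [List.nodup_append'] at hnE
    obtain ⟨hn₁, hn₂, hdis⟩ := hnE
    have hw : ∀ v ∈ w, v ∉ D' := fun v hv hv' => by
      have := hp'.mem_iff.1 (List.mem_append_left ws' hv')
      rw [List.nodup_append'] at hn
      have hd := hn.2.2
      exact hd (a := v) (by simp [hv]) (by simp [this])
    have hw' : ∀ v ∈ w', v ∉ D := fun v hv hv' => by
      have := hp.mem_iff.1 (List.mem_append_left ws hv')
      rw [List.nodup_append'] at hn
      have hd := hn.2.2
      exact hd (a := v) (by simp [this]) (by simp [hv])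
    have hD : ∀ v ∈ [a, z, a', z'], v ∉ D ∧ v ∉ D' := fun v hv =>
      ⟨fun h => hdis (a := v) (by simp [h]) (by simp at hv ⊢; grind),
        fun h => hdis (a := v) (by simp [h]) (by simp at hv ⊢; grind)⟩
    refine ⟨c :: (D ++ D'), [z, a', z'] ++ ws ++ ws', a, [], 0, hn₂, fun v hv h => hdis h hv,
      rfl, fun u => ?_, ?_⟩
    · have hu : u ∪ {v | v ∈ c :: (D ++ D')} = insert c (u ∪ {v | v ∈ D} ∪ {v | v ∈ D'}) := by
        ext v
        simp only [Set.mem_union, Set.mem_ofPred_eq, List.mem_cons, List.mem_append,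
          Set.mem_insert_iff]
        rw [or_left_comm, or_assoc]
      have hmem : ∀ v ∈ [a, z, a', z'], (v ∈ u ∪ {v | v ∈ D} ∪ {v | v ∈ D'} ↔ v ∈ u) := by
        intro v hv
        simp [hD v hv]
      have h₁ : PathQ w (u ∪ {v | v ∈ D} ∪ {v | v ∈ D'}) ↔ VarQ ws u := by
        rw [← hQ]
        exact pathQ_congr fun v hv => by simp [hw v hv]
      have h₂ : PathQ w' (u ∪ {v | v ∈ D} ∪ {v | v ∈ D'}) ↔ VarQ ws' u := by
        rw [← hQ']
        exact pathQ_congr fun v hv => by simp [hw' v hv]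
      rw [hu, cycQ_insert hc.1, cycQ_insert hc.2, h₁, h₂, hmem a (by simp), hmem z (by simp),
        hmem a' (by simp), hmem z' (by simp)]
      simp only [CycQ, List.nil_append, List.cons_append, pathQ_cons_cons, pathQ_singleton,
        varQ_append, varQ_cons]
      clear * -
      grind
    · simp [hlen, hlen'] at h3 ⊢
      lia

end LowerBound

section LowerBoundInstances

variable {K : Type} [Field K] {V : Type}

theorem pdLE_pendantQ {ws : List V} {c y₁ y₂ y₃ : V} {l : List V} {k : ℕ}
    (hn : (c :: y₁ :: y₂ :: y₃ :: l ++ ws).Nodup) (hl : l.length = 3 * k) :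
    PdLE (sqIdeal K (PendantQ ws c y₁ y₂ y₃ l)) (ws.length + 2 * k + 3) := by
  rcases l with _ | ⟨y₄, l⟩
  · refine (pdLE_varQ (ws := y₂ :: c :: ws) ?_).congr (fun u => (pendantQ_nil ..).symm)
      (by simp; lia)
    classical
    rw [List.nodup_iff_count_le_one] at hn ⊢
    intro v
    have := hn v
    simp only [List.count_append, List.count_cons, List.count_nil] at this ⊢
    lia
  obtain ⟨l₀, z, rfl⟩ := List.exists_eq_concat (l := l) (by rintro rfl; simp at hl; lia)
  have hc : c ∉ y₁ :: y₂ :: y₃ :: y₄ :: (l₀ ++ [z]) ++ ws := (List.nodup_cons.1 hn).1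
  have hcw : ∀ w ∈ y₁ :: y₂ :: y₃ :: y₄ :: (l₀ ++ [z]) ++ ws, ∀ u : Set V,
      w ∈ insert c u ↔ w ∈ u := fun w hw u =>
    mem_insert_iff_of_ne (by rintro rfl; exact hc hw) u
  refine PdLE.of_insert (monotone_pendantQ _ _ _ _ _ _) c ?_ ?_
  · refine (pdLE_varQ_pathQ (ws := [y₂, y₁, y₄, z] ++ ws) (l := l₀) ?_).congr (fun u => ?_) ?_
    · classical
      rw [List.nodup_iff_count_le_one] at hn ⊢
      intro v
      have := hn v
      simp only [List.count_append, List.count_cons, List.count_nil] at this ⊢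
      lia
    · have h := cycQ_insert (fun h => hc (List.mem_append_left ws (by simp_all))) u
        (c := c) (a := y₄) (w := l₀) (z := z)
      have h₁ := varQ_congr (l := y₂ :: ws) (u := insert c u) (u' := u) fun w hw =>
        hcw w (by simp at hw ⊢; grind) u
      have h₂ := hcw y₁ (by simp) u
      have h₄ := hcw y₄ (by simp) u
      have hcu := Set.mem_insert c u
      rw [PendantQ, h₁]
      simp only [CycQ, List.cons_append, pathQ_cons_cons, varQ_cons, List.nil_append] at h ⊢
      clear * - h h₂ h₄ hcu
      grind
    · simp at hl ⊢; lia
  · refine (pdLE_varQ_pathQ (ws := c :: y₂ :: ws) (l := y₃ :: y₄ :: (l₀ ++ [z])) ?_).congr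
      (fun u => ?_) ?_
    · classical
      rw [List.nodup_iff_count_le_one] at hn ⊢
      intro v
      have := hn v
      simp only [List.count_append, List.count_cons, List.count_nil] at this ⊢
      lia
    · have h₁ := mem_or_pathQ_concat (y₃ :: y₄ :: (l₀ ++ [z])) c u
      have h₂ := mem_or_cycQ c (y₄ :: (l₀ ++ [z])) u
      simp only [PendantQ, CycQ, List.cons_append, pathQ_cons_cons, varQ_cons] at h₁ h₂ ⊢
      clear * - h₁ h₂
      grind
    · simp at hl ⊢; lia

theorem araLE_pendantQ [Finite V] {ws : List V} {c y₁ y₂ y₃ : V} {l : List V} {k : ℕ}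
    (hl : l.length = 3 * k) :
    AraLE (sqIdeal K (PendantQ ws c y₁ y₂ y₃ l)) (ws.length + 2 * k + 3) := by
  refine AraWith.araLE (monotone_pendantQ _ _ _ _ _ _) ?_
  rcases l with _ | ⟨y₄, l⟩
  · exact (araWith_varQ 0 (y₂ :: c :: ws)).congr (fun u => (pendantQ_nil ..).symm)
      (by simp; lia)
  · exact (((araWith_varQ 0 (y₂ :: ws)).or (araWith_pathQ_four y₁ c y₄ y₃)).or
      (araWith_pathQ (y₄ :: l ++ [c]))).congr (fun u => (pendantQ_cons ..).symm)
      (by simp at hl ⊢; lia)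

theorem isRegularSeqOn_sqIdeal {Q : Set V → Prop} (hQ : Monotone Q) :
    ∀ ws : List V, ws.Nodup → (∀ v ∈ ws, ∀ u, Q (insert v u) → Q u) →
      IsRegularSeqOn (sqIdeal K Q) (ws.map X)
  | [], _, _ => trivial
  | v :: ws, hn, hv => by
    rw [List.nodup_cons] at hn
    refine ⟨isColonOf_sqIdeal_self hQ (hv v (by simp)), ?_⟩
    rw [sqIdeal_sup_span]
    refine isRegularSeqOn_sqIdeal (hQ.or (monotone_mem v)) ws hn.2 fun w hw u => ?_
    rw [mem_insert_iff_of_ne (v := w) (w := v) (by rintro rfl; exact hn.1 hw)]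
    exact Or.imp_left (hv w (by simp [hw]) u)

theorem isRegularSeqOn_bot_map_X {ws : List V} (hn : ws.Nodup) :
    IsRegularSeqOn (⊥ : Ideal (MvPolynomial V K)) (ws.map X) := by
  rw [← sqIdeal_false]
  exact isRegularSeqOn_sqIdeal monotone_const ws hn fun _ _ _ h => h

theorem sqIdeal_varQ (ws : List V) :
    sqIdeal K (VarQ ws) = Ideal.span {f | f ∈ ws.map X} := by
  induction ws with
  | nil =>
    rw [sqIdeal_congr (Q' := fun _ => False) (by simp), sqIdeal_false]
    simp
  | cons v ws ih =>
    rw [sqIdeal_congr (Q' := fun u => VarQ ws u ∨ v ∈ u) (by simp [or_comm]),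
      ← sqIdeal_sup_span, ih, ← Ideal.span_union]
    congr 1
    ext f
    simp

theorem span_map_X_le_ker (D ws : List V) [DecidablePred (· ∈ D)] (h : ∀ w ∈ ws, w ∉ D) :
    Ideal.span {f : MvPolynomial V K | f ∈ ws.map X} ≤
      RingHom.ker (aeval (R := K) fun v => if v ∈ D then (1 : K) else 0) := by
  rw [Ideal.span_le]
  intro f hf
  obtain ⟨w, hw, rfl⟩ := List.mem_map.1 hf
  simp [h w hw]

open scoped Classical in
/-- The residue field of the point with coordinate `1` on `D` and `0` elsewhere. -/
noncomputable def pointMod (K : Type) [Field K] {V : Type} (D : List V) :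
    ModuleCat.{0} (MvPolynomial V K) :=
  cyclicMod (RingHom.ker (aeval (R := K) fun v => if v ∈ D then (1 : K) else 0))

theorem X_smul_pointMod {D : List V} {v : V} (hv : v ∈ D) (n : pointMod K D) :
    (X v : MvPolynomial V K) • n = n := by
  obtain ⟨r, rfl⟩ := Submodule.Quotient.mk_surjective _ n
  refine (Submodule.Quotient.eq _).2 ?_
  simp [hv]

theorem X_smul_pointMod_of_notMem {D : List V} {v : V} (hv : v ∉ D) (n : pointMod K D) :
    (X v : MvPolynomial V K) • n = 0 := by
  obtain ⟨r, rfl⟩ := Submodule.Quotient.mk_surjective _ n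
  refine (Submodule.Quotient.mk_eq_zero _).2 ?_
  simp [hv]

theorem not_extVanish_zero_pointMod (D : List V) :
    ¬ ExtVanish (cyclicMod (⊥ : Ideal (MvPolynomial V K))) (pointMod K D) 0 := by
  intro h
  have := eq_zero_of_extVanish_zero h (ModuleCat.ofHom (Submodule.factor bot_le :
    (MvPolynomial V K ⧸ (⊥ : Ideal (MvPolynomial V K))) →ₗ[MvPolynomial V K] _))
  have h1 := congrArg (fun g => g.hom (Submodule.Quotient.mk 1)) this
  have h2 := (Submodule.Quotient.mk_eq_zero _).1 h1
  simp at h2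

theorem not_extVanish_varQ {D ws : List V} (hn : ws.Nodup) (hD : ∀ w ∈ ws, w ∉ D) :
    ¬ ExtVanish (cyclicMod (sqIdeal K (VarQ ws))) (pointMod K D) ws.length := by
  intro h
  refine not_extVanish_zero_pointMod (K := K) D
    (ExtVanish.of_supList (isRegularSeqOn_bot_map_X hn) ?_ ?_)
  · simp only [List.mem_map, forall_exists_index, and_imp, forall_apply_eq_imp_iff₂]
    exact fun v hv => X_smul_pointMod_of_notMem (hD v hv)
  · rw [supList_eq, bot_sup_eq, ← sqIdeal_varQ]
    simpa using h

theorem not_extVanish_cycQ_cycQ {c : V} {xs ys : List V} (hn : (c :: xs ++ ys).Nodup)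
    (hx : 2 ≤ xs.length) (hy : 2 ≤ ys.length) :
    ∃ N : ModuleCat.{0} (MvPolynomial V K),
      ¬ ExtVanish (cyclicMod (sqIdeal K fun u => CycQ c xs u ∨ CycQ c ys u)) N
        (2 * (xs.length + 1) / 3 + 2 * (ys.length + 1) / 3 +
          if (xs.length + 1) % 3 = 1 ∧ (ys.length + 1) % 3 = 1 then 1 else 0) := by
  obtain ⟨D, ws, c', l, k, hn', hD, hl, hQ, hp⟩ := exists_reduction hn hx hy
  refine ⟨pointMod K D, fun h => ?_⟩
  refine not_vanish_cycQ
    (Van := fun Q i => ExtVanish (cyclicMod (sqIdeal K Q)) (pointMod K D) i) (D := D)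
    ?_ ?_ ?_ ?_ k ws c' l hn' hD hl ?_
  · intro A B i hA hB _ h h₁ h₂
    rw [← sqIdeal_inf hA hB] at h
    rw [← sqIdeal_sup]
    exact h.sup h₁ h₂
  · exact fun ws l hn => pdLE_varQ_pathQ hn _ _ (by lia)
  · exact fun ws c y₁ y₂ y₃ l k hn hl => pdLE_pendantQ hn hl _ _ (by lia)
  · exact fun v ws hn hD => not_extVanish_varQ hn hD
  · have := of_insert_list (P := fun Q => ExtVanish (cyclicMod (sqIdeal K Q)) (pointMod K D) _) D _
      ((monotone_cycQ c xs).or (monotone_cycQ c ys))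
      (fun v hv Q hQ h => h.colon (isColonOf_sqIdeal hQ v) (X_smul_pointMod hv)) h
    rw [sqIdeal_congr hQ, ← hp] at this
    exact this

theorem not_torsionExact_varQ [Finite V] {ws : List V} {q : ℕ} (hn : ws.Nodup)
    (hq : ws.length = q + 1)
    (P : InjectiveResolution (cyclicMod (⊥ : Ideal (MvPolynomial V K)))) :
    ¬ TorsionExact (injDiff P) (sqIdeal K (VarQ ws)) q := by
  rw [sqIdeal_varQ]
  refine not_torsionExact_of_isRegularSeqOn P (isRegularSeqOn_bot_map_X hn) ?_ (by simpa using hq)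
  classical
  exact ne_top_of_le_ne_top (RingHom.ker_ne_top _) (span_map_X_le_ker [] ws (by simp))

theorem le_of_araLE_cycQ_cycQ [Finite V] {c : V} {xs ys : List V} (hn : (c :: xs ++ ys).Nodup)
    (hx : 2 ≤ xs.length) (hy : 2 ≤ ys.length) {s : ℕ}
    (h : AraLE (sqIdeal K fun u => CycQ c xs u ∨ CycQ c ys u) s) :
    2 * (xs.length + 1) / 3 + 2 * (ys.length + 1) / 3 +
      (if (xs.length + 1) % 3 = 1 ∧ (ys.length + 1) % 3 = 1 then 1 else 0) ≤ s := by
  obtain ⟨D, ws, c', l, k, hn', hD, hl, hQ, hp⟩ := exists_reduction hn hx hy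
  have P := injectiveResolution (cyclicMod (⊥ : Ideal (MvPolynomial V K)))
  rw [← hp]
  by_contra! hs
  refine not_vanish_cycQ
    (Van := fun Q i => ∀ j, j + 1 = i → TorsionExact (injDiff P) (sqIdeal K Q) j) (D := D)
    ?_ ?_ ?_ ?_ k ws c' l hn' hD hl ?_
  · rintro A B i hA hB hi h h₁ h₂ j hj
    obtain ⟨i, rfl⟩ : ∃ i', i = i' + 1 := ⟨i - 1, by lia⟩
    obtain rfl : j = i + 1 := by lia
    have h := h i rfl
    rw [← sqIdeal_inf hA hB] at h
    rw [← sqIdeal_sup]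
    exact TorsionExact.sup (injective_injRes P) (injDiff_injDiff P) inf_le_left inf_le_right
      (Ideal.mul_le_inf.trans Ideal.le_radical) h (h₁ _ rfl) (h₂ _ rfl)
  · rintro ws l hn j hj
    refine AraLE.torsionExact (AraWith.araLE ((monotone_varQ _).or (monotone_pathQ _))
      ((araWith_varQ 0 ws).or (araWith_pathQ l))) P (by lia)
  · rintro ws c y₁ y₂ y₃ l k hn hl j hj
    exact (araLE_pendantQ hl).torsionExact P (by lia)
  · exact fun v ws hn hD h => not_torsionExact_varQ hn rfl P (h _ rfl)
  · rintro j hj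
    have := of_insert_list (P := fun Q => AraLE (sqIdeal K Q) s) D _
      ((monotone_cycQ c xs).or (monotone_cycQ c ys))
      (fun v hv Q hQ h => by
        rw [← map_substOne_sqIdeal hQ v]
        exact h.map _) h
    rw [sqIdeal_congr hQ] at this
    exact this.torsionExact P (by lia)

end LowerBoundInstances

section EdgeIdeals

variable {K : Type} [Field K] {V : Type}

theorem sqIdeal_edges {ι : Type} (S : Set ι) {a b : ι → V} (h : ∀ i ∈ S, a i ≠ b i) :
    sqIdeal K (fun u => ∃ i ∈ S, a i ∈ u ∧ b i ∈ u) =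
      Ideal.span ((fun i => (X (a i) * X (b i) : MvPolynomial V K)) '' S) := by
  apply le_antisymm
  · refine Ideal.span_le.2 ?_
    rintro _ ⟨m, ⟨i, hi, hm⟩, rfl⟩
    have : monomial m (1 : K) ∈ sqIdeal K fun u => a i ∈ u ∧ b i ∈ u :=
      Ideal.subset_span ⟨m, hm, rfl⟩
    rw [sqIdeal_edge (h i hi)] at this
    exact Ideal.span_mono (Set.singleton_subset_iff.2 (Set.mem_image_of_mem _ hi)) this
  · refine Ideal.span_le.2 ?_
    rintro _ ⟨i, hi, rfl⟩
    exact X_mul_X_mem_sqIdeal (Q := fun u => ∃ i ∈ S, a i ∈ u ∧ b i ∈ u) ⟨i, hi, by simp, by simp⟩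

theorem pathQ_map_range' (f : ℕ → V) (s : ℕ) (u : Set V) : ∀ k : ℕ,
    PathQ ((List.range' s (k + 1)).map f) u ↔
      ∃ j ∈ Set.Ico s (s + k), f j ∈ u ∧ f (j + 1) ∈ u
  | 0 => by simp
  | k + 1 => by
    have ih := pathQ_map_range' f s u k
    rw [List.range'_1_concat, List.range'_1_concat, List.map_append, List.map_append,
      List.append_assoc, List.map_singleton, List.map_singleton, List.singleton_append,
      pathQ_append_pair, ← List.map_singleton, ← List.map_append, ← List.range'_1_concat, ih]
    constructor
    · rintro (⟨j, ⟨h₁, h₂⟩, h⟩ | h)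
      · exact ⟨j, ⟨h₁, by lia⟩, h⟩
      · exact ⟨s + k, ⟨by lia, by lia⟩, h⟩
    · rintro ⟨j, ⟨h₁, h₂⟩, h⟩
      rcases Nat.lt_or_ge j (s + k) with h₃ | h₃
      · exact Or.inl ⟨j, ⟨h₁, h₃⟩, h⟩
      · obtain rfl : j = s + k := by lia
        exact Or.inr h

theorem pathQ_map_range'_concat (f : ℕ → V) (s k : ℕ) (c : V) (u : Set V) :
    PathQ ((List.range' s (k + 1)).map f ++ [c]) u ↔
      (∃ j ∈ Set.Ico s (s + k), f j ∈ u ∧ f (j + 1) ∈ u) ∨ (f (s + k) ∈ u ∧ c ∈ u) := by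
  rw [← pathQ_map_range', List.range'_1_concat, List.map_append, List.append_assoc,
    List.map_singleton, List.singleton_append, pathQ_append_pair]

theorem cycQ_map_range'_one (f : ℕ → V) (k : ℕ) (u : Set V) :
    CycQ (f 0) ((List.range' 1 k).map f) u ↔
      (∃ j ∈ Set.Iio k, f j ∈ u ∧ f (j + 1) ∈ u) ∨ (f k ∈ u ∧ f 0 ∈ u) := by
  have := pathQ_map_range'_concat f 0 k (f 0) u
  simpa [CycQ, List.range'_succ] using this

theorem cycQ_map_range' (f : ℕ → V) (s k : ℕ) (c : V) (u : Set V) :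
    CycQ c ((List.range' s (k + 1)).map f) u ↔ (c ∈ u ∧ f s ∈ u) ∨
      (∃ j ∈ Set.Ico s (s + k), f j ∈ u ∧ f (j + 1) ∈ u) ∨ (f (s + k) ∈ u ∧ c ∈ u) := by
  rw [← pathQ_map_range'_concat]
  simp [CycQ, List.range'_succ]

end EdgeIdeals

theorem natCast_zmod_inj {N i j : ℕ} (hi : i < N) (hj : j < N) (h : (i : ZMod N) = j) : i = j := by
  rwa [ZMod.natCast_eq_natCast_iff', Nat.mod_eq_of_lt hi, Nat.mod_eq_of_lt hj] at h

theorem nodup_vertices {n m : ℕ} (hn : 3 ≤ n) (hm : 3 ≤ m) :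
    (((0 : ℕ) : ZMod (n + m - 1)) :: (List.range' 1 (n - 1)).map (Nat.cast) ++
      (List.range' n (m - 2 + 1)).map (Nat.cast)).Nodup := by
  rw [← List.map_cons, ← List.map_append]
  refine List.Nodup.map_on (fun i hi j hj => natCast_zmod_inj ?_ ?_) ?_
  · simp at hi; lia
  · simp at hj; lia
  · rw [List.nodup_append']
    refine ⟨by simp [List.nodup_range'], List.nodup_range', fun i hi hj => ?_⟩
    simp at hi hj; lia

theorem vertexJoinIdeal_eq (K : Type) [Field K] {n m : ℕ} (hn : 3 ≤ n) (hm : 3 ≤ m) :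
    vertexJoinIdeal K n m = sqIdeal K fun u =>
      CycQ ((0 : ℕ) : ZMod (n + m - 1)) ((List.range' 1 (n - 1)).map (Nat.cast)) u ∨
        CycQ ((0 : ℕ) : ZMod (n + m - 1)) ((List.range' n (m - 2 + 1)).map (Nat.cast)) u := by
  have hne : ∀ i j, i < n + m - 1 → j < n + m - 1 → i ≠ j →
      (i : ZMod (n + m - 1)) ≠ (j : ZMod (n + m - 1)) :=
    fun i j hi hj hij h => hij (natCast_zmod_inj hi hj h)
  have hz : (0 : ZMod (n + m - 1)) = ((0 : ℕ) : ZMod (n + m - 1)) := by simp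
  have hs : n + (m - 2) = n + m - 2 := by lia
  rw [vertexJoinIdeal, hz, Ideal.span_union, Ideal.span_union, Ideal.span_union, Ideal.span_union,
    ← sqIdeal_edges (Set.Iio (n - 1)) fun i hi => hne _ _ (by simp at hi; lia)
      (by simp at hi; lia) (by lia),
    ← sqIdeal_edges (Set.Ico n (n + m - 2)) fun i hi => hne _ _ (by simp at hi; lia)
      (by simp at hi; lia) (by lia),
    ← sqIdeal_edge (hne _ _ (by lia) (by lia) (by lia)),
    ← sqIdeal_edge (hne _ _ (by lia) (by lia) (by lia)),
    ← sqIdeal_edge (hne _ _ (by lia) (by lia) (by lia)),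
    sqIdeal_sup, sqIdeal_sup, sqIdeal_sup, sqIdeal_sup]
  refine sqIdeal_congr fun u => ?_
  rw [cycQ_map_range'_one, cycQ_map_range', hs]
  simp only [or_assoc]

/-- For the graph `G` obtained by joining two cycles `Cₙ` and `C_m` (`n, m ≥ 3`) at a
single common vertex, with `N = n + m - 1` vertices, `ara I(G) = pd_R R/I(G)`, and the
common value is `(2N+1)/3` if `N ≡ 1`, `2N/3` if `N ≡ 0`, and, for `N ≡ 2 (mod 3)`,
`(2N+2)/3` when `3 ∣ m` (equivalently when `3 ∣ n` and `3 ∣ m`) and `(2N-1)/3`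
otherwise. -/
theorem vertex_join_ara_eq_pd (K : Type) [Field K] (n m : ℕ) (hn : 3 ≤ n) (hm : 3 ≤ m) :
    araRank (vertexJoinIdeal K n m) =
        (if (n + m - 1) % 3 = 1 then (2 * (n + m - 1) + 1) / 3
          else if (n + m - 1) % 3 = 0 then 2 * (n + m - 1) / 3
          else if m % 3 = 0 then (2 * (n + m - 1) + 2) / 3
          else (2 * (n + m - 1) - 1) / 3) ∧
      projDim (MvPolynomial (ZMod (n + m - 1)) K)
          (MvPolynomial (ZMod (n + m - 1)) K ⧸ vertexJoinIdeal K n m) =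
        ((araRank (vertexJoinIdeal K n m) : ℕ) : ℕ∞) := by
  have : NeZero (n + m - 1) := ⟨by lia⟩
  have hI := vertexJoinIdeal_eq K hn hm
  have hnd := nodup_vertices hn hm
  set xs : List (ZMod (n + m - 1)) := (List.range' 1 (n - 1)).map Nat.cast with hxs
  set ys : List (ZMod (n + m - 1)) := (List.range' n (m - 2 + 1)).map Nat.cast with hys
  have hx : xs.length + 1 = n := by simp [hxs]; lia
  have hy : ys.length + 1 = m := by simp [hys]; lia
  obtain ⟨N, hN⟩ := not_extVanish_cycQ_cycQ (K := K) hnd (by lia) (by lia)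
  have hle := fun s => le_of_araLE_cycQ_cycQ (K := K) (s := s) hnd (by lia) (by lia)
  rw [hx, hy] at hN hle
  rw [← hI] at hN hle
  set p := 2 * n / 3 + 2 * m / 3 + if n % 3 = 1 ∧ m % 3 = 1 then 1 else 0 with hp
  have hara : AraLE (vertexJoinIdeal K n m) p := by
    rw [hI]
    refine (araWith_cycQ_cycQ _ (by lia) (by lia) ?_ fun h₁ h₂ => ?_).araLE
      ((monotone_cycQ _ _).or (monotone_cycQ _ _))
    · rw [hx, hy]; lia
    · rw [hx] at h₁ ⊢
      rw [hy] at h₂ ⊢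
      simp [hp, h₁, h₂]
  have hpd : PdLE (vertexJoinIdeal K n m) p := by
    rw [hI]
    refine pdLE_cycQ_cycQ hnd (by lia) (by lia) ?_ ?_
    · rw [hx, hy]; lia
    · rw [hp]; split_ifs <;> lia
  have hrank : araRank (vertexJoinIdeal K n m) = p :=
    le_antisymm (Nat.sInf_le hara) (le_csInf ⟨p, hara⟩ fun s hs => hle s hs)
  refine ⟨?_, ?_⟩
  · rw [hrank, hp]
    split_ifs <;> lia
  · rw [hrank]
    refine sInf_ext_eq hpd.hasProjectiveDimensionLT N (by lia) fun h => hN fun e => ?_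
    exact Subsingleton.elim _ _
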